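/- For every natural number n ≥ 0, u₂ⁿ · B[n,0,0,n] · u₁ⁿ = Σ_{(k,l)} q^{g(n,k,l)} [n−k; l][n−l; k] p₁^{n−k} u₂^{2k} u₁^{2l} p₀^{n−l}, where the sum runs over all pairs (k,l) ∈ ℕ² with k + l ≤ n, and g(n,k,l) = n(n−3) + k(n+1) + l(n+1) − 2kl. -/

import Mathlib

noncomputable section

abbrev F : Type := RatFunc ℚ

/-- The deformation parameter `q`. -/
def qq : F := RatFunc.X

/-- The quantum integer `[3] = q² + 1 + q⁻²`. -/
def box3 : F := qq ^ 2 + 1 + (qq⁻¹) ^ 2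

/-- The generators `E₁, E₂` of the free algebra. -/
def gen (i : Fin 2) : FreeAlgebra F (Fin 2) := FreeAlgebra.ι F i

/-- The quantized Serre relations. -/
inductive SerreRel : FreeAlgebra F (Fin 2) → FreeAlgebra F (Fin 2) → Prop
  | rel1 : SerreRel
      (gen 0 ^ 3 * gen 1 - box3 • (gen 0 ^ 2 * gen 1 * gen 0)
        + box3 • (gen 0 * gen 1 * gen 0 ^ 2) - gen 1 * gen 0 ^ 3) 0
  | rel2 : SerreRel
      (gen 1 ^ 3 * gen 0 - box3 • (gen 1 ^ 2 * gen 0 * gen 1)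
        + box3 • (gen 1 * gen 0 * gen 1 ^ 2) - gen 0 * gen 1 ^ 3) 0

/-- `U = U_q(𝔫)`, the free algebra on `E₁, E₂` modulo the quantized Serre relations. -/
abbrev U : Type := RingQuot SerreRel

def E1 : U := RingQuot.mkAlgHom F SerreRel (gen 0)
def E2 : U := RingQuot.mkAlgHom F SerreRel (gen 1)

/-- `A = (1/(q+q⁻¹))(E₂E₁ − q⁻²E₁E₂)`. -/
def Aelt : U := (qq + qq⁻¹)⁻¹ • (E2 * E1 - (qq⁻¹) ^ 2 • (E1 * E2))

def v0 : U := E1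
def v1 : U := Aelt * v0 - v0 * Aelt
def v2 : U := Aelt * v1 - v1 * Aelt
def v3 : U := Aelt * v2 - v2 * Aelt

/-- `uᵢ = (1 − q⁻²)⁻²ⁱ vᵢ`. -/
def u0 : U := v0
def u1 : U := ((1 - (qq⁻¹) ^ 2)⁻¹) ^ 2 • v1
def u2 : U := ((1 - (qq⁻¹) ^ 2)⁻¹) ^ 4 • v2
def u3 : U := ((1 - (qq⁻¹) ^ 2)⁻¹) ^ 6 • v3

/-- `p₁ = u₃u₁ − q²u₂²`. -/
def p1 : U := u3 * u1 - qq ^ 2 • u2 ^ 2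
/-- `p₀ = u₂u₀ − q²u₁²`. -/
def p0 : U := u2 * u0 - qq ^ 2 • u1 ^ 2

/-- `S`, the subalgebra of `U` generated by `u₀, u₁, u₂, u₃`. -/
abbrev Sgen : Subalgebra F U := Algebra.adjoin F ({u0, u1, u2, u3} : Set U)

def us0 : Sgen := ⟨u0, Algebra.subset_adjoin (by simp)⟩
def us1 : Sgen := ⟨u1, Algebra.subset_adjoin (by simp)⟩
def us2 : Sgen := ⟨u2, Algebra.subset_adjoin (by simp)⟩
def us3 : Sgen := ⟨u3, Algebra.subset_adjoin (by simp)⟩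

/-- `p₁ = u₃u₁ − q²u₂²` as an element of `S`. -/
def ps1 : Sgen := us3 * us1 - qq ^ 2 • us2 ^ 2
/-- `p₀ = u₂u₀ − q²u₁²` as an element of `S`. -/
def ps0 : Sgen := us2 * us0 - qq ^ 2 • us1 ^ 2

/-- Index quadruples `a = (a₃, a₂, a₁, a₀)`. -/
abbrev Idx : Type := ℕ × ℕ × ℕ × ℕ

/-- The PBW monomial `u₃^{a₃}u₂^{a₂}u₁^{a₁}u₀^{a₀}`. -/
def mon (a : Idx) : Sgen := us3 ^ a.1 * us2 ^ a.2.1 * us1 ^ a.2.2.1 * us0 ^ a.2.2.2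

/-- `b(a) = C(a₃,2)+C(a₂,2)+C(a₁,2)+C(a₀,2)`. -/
def bexp (a : Idx) : ℕ :=
  Nat.choose a.1 2 + Nat.choose a.2.1 2 + Nat.choose a.2.2.1 2 + Nat.choose a.2.2.2 2

/-- The dual PBW basis element `E[a] = q^{b(a)} u₃^{a₃}u₂^{a₂}u₁^{a₁}u₀^{a₀}`. -/
def Ee (a : Idx) : Sgen := qq ^ bexp a • mon a

/-- `N(a) = (a₃+a₂+a₁+a₀)² − 7a₃ − 5a₂ − 3a₁ − a₀`. -/
def Nnum (a : Idx) : ℤ :=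
  ((a.1 : ℤ) + a.2.1 + a.2.2.1 + a.2.2.2) ^ 2
    - 7 * a.1 - 5 * a.2.1 - 3 * a.2.2.1 - a.2.2.2

/-- `a ⊴ b` iff `b − a ∈ ℕ·(−1,2,−1,0) + ℕ·(0,−1,2,−1)`. -/
def tri (a b : Idx) : Prop :=
  ∃ s r : ℕ,
    (b.1 : ℤ) = a.1 - s ∧
    (b.2.1 : ℤ) = a.2.1 + 2 * s - r ∧
    (b.2.2.1 : ℤ) = a.2.2.1 - s + 2 * r ∧
    (b.2.2.2 : ℤ) = a.2.2.2 - r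

/-- `S(a) = {b ∈ ℕ⁴ : a ⊴ b and a ≠ b}`. -/
def Sset (a : Idx) : Set Idx := {b | tri a b ∧ a ≠ b}

/-- Condition (i): `B[a] − E[a] ∈ Σ_{b ∈ S(a)} qℤ[q]·E[b]`. -/
def cond1 (B : Idx → Sgen) (a : Idx) : Prop :=
  ∃ φ : Idx →₀ Polynomial ℤ,
    (↑φ.support : Set Idx) ⊆ Sset a ∧
    B a - Ee a =
      φ.sum fun b p => (qq * Polynomial.eval₂ (Int.castRingHom F) qq p) • Ee b

/-- Hypotheses on the bar involution of coefficients `bar : q ↦ q⁻¹` and on the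
anti-automorphism `σ` of `S`: `σ` is an additive, anti-multiplicative bijection with
`σ(c(q)·x) = c(q⁻¹)·σ(x)` and `σ(uᵢ) = q^{2i}uᵢ`. -/
def SigmaHyp (bar : F →+* F) (σ : Sgen → Sgen) : Prop :=
  bar qq = qq⁻¹ ∧
  Function.Bijective σ ∧
  (∀ x y : Sgen, σ (x + y) = σ x + σ y) ∧
  (∀ x y : Sgen, σ (x * y) = σ y * σ x) ∧
  (∀ (c : F) (x : Sgen), σ (c • x) = bar c • σ x) ∧
  σ us0 = us0 ∧ σ us1 = qq ^ 2 • us1 ∧ σ us2 = qq ^ 4 • us2 ∧ σ us3 = qq ^ 6 • us3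

/-- The defining properties of the dual canonical basis `B`: for every `a ∈ ℕ⁴`,
`B[a] − E[a] ∈ Σ_{b ∈ S(a)} qℤ[q]·E[b]` and `σ(B[a]) = q^{−N(a)}B[a]`. -/
def DCB (bar : F →+* F) (σ : Sgen → Sgen) (B : Idx → Sgen) : Prop :=
  ∀ a : Idx, cond1 B a ∧ σ (B a) = qq ^ (-Nnum a) • B a

/-- Extension of `B` to integer quadruples by the convention that `B[a] = 0` whenever
some coordinate of `a` is negative. -/
def Bz (B : Idx → Sgen) (a : ℤ × ℤ × ℤ × ℤ) : Sgen :=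
  if 0 ≤ a.1 ∧ 0 ≤ a.2.1 ∧ 0 ≤ a.2.2.1 ∧ 0 ≤ a.2.2.2 then
    B (a.1.toNat, a.2.1.toNat, a.2.2.1.toNat, a.2.2.2.toNat)
  else 0

/-- The quantum integer `[m] = (q^m − q^{−m})/(q − q⁻¹)`. -/
def qint (m : ℤ) : F := (qq ^ m - qq ^ (-m)) / (qq - qq⁻¹)

/-- The quantized factorial `[i]! = [i][i−1]⋯[1]`. -/
def qfact (i : ℕ) : F := ∏ j ∈ Finset.range i, qint ((j : ℤ) + 1)

/-- The quantum binomial coefficient `[m; i] = [m][m−1]⋯[m−i+1]/[i]!`. -/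
def qbinom (m : ℤ) (i : ℕ) : F := (∏ j ∈ Finset.range i, qint (m - j)) / qfact i

/-- `g(n,k,l) = n(n−3) + k(n+1) + l(n+1) − 2kl`. -/
def gexp (n k l : ℕ) : ℤ :=
  (n : ℤ) * ((n : ℤ) - 3) + (k : ℤ) * ((n : ℤ) + 1) + (l : ℤ) * ((n : ℤ) + 1)
    - 2 * (k : ℤ) * (l : ℤ)

/-!
Write `z = u₃u₀ - q²u₂u₁`. The elements `p₁`, `z`, `p₀` are the quantum minors of the Hankel matrix
with rows `(u₃, u₂, u₁)` and `(u₂, u₁, u₀)`; they `q`-commute with each other, and `z u₁`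
is a combination of `u₀p₁` and `u₂p₀`. Let `t₀ = 0`, `t₁ = 1`, `tₙ₊₂ = z tₙ₊₁ - q⁻²p₁p₀ tₙ`.

The element `q^(2n(n-1)) tₙ₊₁` is an eigenvector of `σ` with eigenvalue `q^(-N(n,0,0,n))`, since
`z` and `p₁p₀` commute and are eigenvectors of `σ`. Interleaving `t` with the sequence
`u₃tₙ₊₁ - q²p₁u₂tₙ` expresses `tₙ₊₂` through multiplications by `u₃`, `p₁u₂`, `u₀` and `u₁p₀`, each
of which acts on PBW monomials by at most two terms; by induction the leading term of
`q^(2n(n-1)) tₙ₊₁` is `E[n,0,0,n]`. A vector of `∑_{b ∈ S(a)} qℤ[q] E[b]` with eigenvalue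
`q^(-N(a))` under `σ` vanishes, hence `B[n,0,0,n] = q^(2n(n-1)) tₙ₊₁`.

Multiplying the recursion by `u₂ⁿ⁺¹` and `u₁ⁿ⁺¹` turns it into a recursion for the coefficients of
`u₂ⁿtₙ₊₁u₁ⁿ` with respect to the monomials `p₁^(n-k) u₂^(2k) u₁^(2l) p₀^(n-l)`, which the products
of two quantum binomial coefficients satisfy by the `q`-Pascal identities.

The commutation relations of the `uᵢ` come from the Serre relations as follows: some element `b`
commutes with `A` and satisfies `[b, E₁] = c [A, [A, E₁]]` with `c ≠ 0`. The derivation `ad b` and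
the operator `c (ad A)²`, not a derivation, both act on the relation `u₀u₁ = q⁻²u₁u₀`, and
comparing the results gives all remaining relations.
-/

section Derivations

attribute [local instance] LieRing.ofAssociativeRing

variable {K : Type*} [Field K] {R : Type*} [Ring R] [Algebra K R]

lemma lie_mul_leibniz (a x y : R) : ⁅a, x * y⁆ = ⁅a, x⁆ * y + x * ⁅a, y⁆ := by
  simp only [Ring.lie_def]
  noncomm_ring

lemma lie_algebra_smul (c : K) (a x : R) : ⁅a, c • x⁆ = c • ⁅a, x⁆ :=
  lie_smul c a x

variable {q c : K} {a b x : R}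

lemma mul_ad_ad_of_mul_ad (hx : x * ⁅a, x⁆ = q⁻¹ ^ 2 • (⁅a, x⁆ * x)) :
    x * ⁅a, ⁅a, x⁆⁆ =
      q⁻¹ ^ 2 • (⁅a, ⁅a, x⁆⁆ * x) - (1 - q⁻¹ ^ 2) • (⁅a, x⁆ * ⁅a, x⁆) := by
  have deriv := congrArg (⁅a, ·⁆) hx
  simp only [lie_algebra_smul, lie_mul_leibniz] at deriv
  linear_combination (norm := module) deriv

lemma lie_ad_of_lie_eq_smul_ad_ad (hb : ⁅b, a⁆ = 0) (hx : ⁅b, x⁆ = c • ⁅a, ⁅a, x⁆⁆) :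
    ⁅b, ⁅a, x⁆⁆ = c • ⁅a, ⁅a, ⁅a, x⁆⁆⁆ := by
  rw [leibniz_lie, hb, zero_lie, zero_add, hx, lie_algebra_smul]

-- `ad b` and `c (ad a)²` agree on `x` and on `ad a x`; the first is a derivation and the second
-- is not, so applying both to the hypothesis gives two different relations.
lemma mul_ad_ad_ad_of_mul_ad (hc : c ≠ 0) (hb : ⁅b, a⁆ = 0) (hbx : ⁅b, x⁆ = c • ⁅a, ⁅a, x⁆⁆)
    (hx : x * ⁅a, x⁆ = q⁻¹ ^ 2 • (⁅a, x⁆ * x)) :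
    x * ⁅a, ⁅a, ⁅a, x⁆⁆⁆ =
      q⁻¹ ^ 2 • (⁅a, ⁅a, ⁅a, x⁆⁆⁆ * x + ⁅a, x⁆ * ⁅a, ⁅a, x⁆⁆) - ⁅a, ⁅a, x⁆⁆ * ⁅a, x⁆ := by
  have deriv := congrArg (⁅b, ·⁆) hx
  simp only [lie_algebra_smul, lie_mul_leibniz, lie_ad_of_lie_eq_smul_ad_ad hb hbx, hbx,
    smul_mul_assoc, mul_smul_comm] at deriv
  apply smul_right_injective R hc
  linear_combination (norm := module) deriv

lemma ad_mul_ad_ad_of_mul_ad (h2 : (2 : K) ≠ 0) (hc : c ≠ 0) (hb : ⁅b, a⁆ = 0)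
    (hbx : ⁅b, x⁆ = c • ⁅a, ⁅a, x⁆⁆) (hx : x * ⁅a, x⁆ = q⁻¹ ^ 2 • (⁅a, x⁆ * x)) :
    ⁅a, x⁆ * ⁅a, ⁅a, x⁆⁆ = q⁻¹ ^ 2 • (⁅a, ⁅a, x⁆⁆ * ⁅a, x⁆) := by
  have deriv := congrArg (⁅a, ·⁆) (mul_ad_ad_of_mul_ad hx)
  simp only [lie_algebra_smul, lie_sub, lie_mul_leibniz] at deriv
  apply smul_right_injective R h2
  linear_combination (norm := module) deriv - mul_ad_ad_ad_of_mul_ad hc hb hbx hx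

end Derivations

/-- The relations that rewrite every product of `u₀, …, u₃` in terms of the ordered monomials
`u₃^{a₃}u₂^{a₂}u₁^{a₁}u₀^{a₀}`. -/
structure Straightening {K R : Type*} [Field K] [Ring R] [Algebra K R] (q : K) (u : Fin 4 → R) :
    Prop where
  q_ne_zero : q ≠ 0
  u0_mul_u1 : u 0 * u 1 = q⁻¹ ^ 2 • (u 1 * u 0)
  u1_mul_u2 : u 1 * u 2 = q⁻¹ ^ 2 • (u 2 * u 1)
  u2_mul_u3 : u 2 * u 3 = q⁻¹ ^ 2 • (u 3 * u 2)
  u0_mul_u2 : u 0 * u 2 = q⁻¹ ^ 2 • (u 2 * u 0) - (1 - q⁻¹ ^ 2) • (u 1 * u 1)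
  u1_mul_u3 : u 1 * u 3 = q⁻¹ ^ 2 • (u 3 * u 1) - (1 - q⁻¹ ^ 2) • (u 2 * u 2)
  u0_mul_u3 : u 0 * u 3 = q⁻¹ ^ 2 • (u 3 * u 0) - (1 - q⁻¹ ^ 4) • (u 2 * u 1)

/-- The quantized Serre relation of type `A₁⁽¹⁾` between `e` and `f`, in this order. -/
def QSerre {K R : Type*} [Field K] [Ring R] [Algebra K R] (q : K) (e f : R) : Prop :=
  e ^ 3 * f - (q ^ 2 + 1 + q⁻¹ ^ 2) • (e ^ 2 * f * e)
    + (q ^ 2 + 1 + q⁻¹ ^ 2) • (e * f * e ^ 2) - f * e ^ 3 = 0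

/-- The `q`-commutator `xy - q⁻²yx`. -/
def qComm {K R : Type*} [Field K] [Ring R] [Algebra K R] (q : K) (x y : R) : R :=
  x * y - q⁻¹ ^ 2 • (y * x)

section Serre

attribute [local instance] LieRing.ofAssociativeRing

variable {K : Type*} [Field K] {R : Type*} [Ring R] [Algebra K R] {q c : K} {a e f x : R}

lemma Straightening.of_ad {b : R} (hq : q ≠ 0) (h2 : (2 : K) ≠ 0) (hc : c ≠ 0) (hb : ⁅b, a⁆ = 0)
    (hbx : ⁅b, x⁆ = c • ⁅a, ⁅a, x⁆⁆) (hx : x * ⁅a, x⁆ = q⁻¹ ^ 2 • (⁅a, x⁆ * x)) :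
    Straightening q ![x, ⁅a, x⁆, ⁅a, ⁅a, x⁆⁆, ⁅a, ⁅a, ⁅a, x⁆⁆⁆] := by
  have hx1 := ad_mul_ad_ad_of_mul_ad h2 hc hb hbx hx
  have hbx1 := lie_ad_of_lie_eq_smul_ad_ad hb hbx
  refine ⟨hq, hx, hx1, ad_mul_ad_ad_of_mul_ad h2 hc hb hbx1 hx1, mul_ad_ad_of_mul_ad hx,
    mul_ad_ad_of_mul_ad hx1, ?_⟩
  change x * ⁅a, ⁅a, ⁅a, x⁆⁆⁆ =
    q⁻¹ ^ 2 • (⁅a, ⁅a, ⁅a, x⁆⁆⁆ * x) - (1 - q⁻¹ ^ 4) • (⁅a, ⁅a, x⁆⁆ * ⁅a, x⁆)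
  rw [mul_ad_ad_ad_of_mul_ad hc hb hbx hx, hx1]
  module

lemma Straightening.pow_smul {u : Fin 4 → R} (h : Straightening q u) (c : K) :
    Straightening q fun i => c ^ (i : ℕ) • u i := by
  refine ⟨h.q_ne_zero, ?_, ?_, ?_, ?_, ?_, ?_⟩ <;>
  · simp only [smul_mul_smul, h.u0_mul_u1, h.u1_mul_u2, h.u2_mul_u3, h.u0_mul_u2, h.u1_mul_u3,
      h.u0_mul_u3, Fin.coe_ofNat_eq_mod]
    module

lemma Straightening.of_map {R' : Type*} [Ring R'] [Algebra K R'] {u : Fin 4 → R}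
    {φ : R →ₐ[K] R'} (hφ : Function.Injective φ) (h : Straightening q (φ ∘ u)) :
    Straightening q u := by
  refine ⟨h.q_ne_zero, hφ ?_, hφ ?_, hφ ?_, hφ ?_, hφ ?_, hφ ?_⟩ <;>
    simp only [map_mul, map_sub, map_smul]
  exacts [h.u0_mul_u1, h.u1_mul_u2, h.u2_mul_u3, h.u0_mul_u2, h.u1_mul_u3, h.u0_mul_u3]

lemma QSerre.mul_lie_qComm (hq : q ≠ 0) (hef : QSerre q e f) :
    e * ⁅qComm q f e, e⁆ = q⁻¹ ^ 2 • (⁅qComm q f e, e⁆ * e) := by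
  rw [QSerre] at hef
  simp only [qComm, Ring.lie_def]
  linear_combination (norm := skip) q⁻¹ ^ 2 • hef
  simp only [mul_sub, sub_mul, smul_mul_assoc, mul_smul_comm, mul_assoc, pow_succ, pow_zero,
    one_mul]
  match_scalars <;> field_simp <;> ring

lemma QSerre.mul_lie_qComm' (hq : q ≠ 0) (hfe : QSerre q f e) :
    f * ⁅qComm q f e, f⁆ = q ^ 2 • (⁅qComm q f e, f⁆ * f) := by
  rw [QSerre] at hfe
  simp only [qComm, Ring.lie_def]
  linear_combination (norm := skip) (-1 : K) • hfe
  simp only [mul_sub, sub_mul, smul_mul_assoc, mul_smul_comm, mul_assoc, pow_succ, pow_zero,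
    one_mul]
  match_scalars <;> field_simp <;> ring

lemma lie_qComm (a x y : R) : ⁅a, qComm q x y⁆ = qComm q ⁅a, x⁆ y + qComm q x ⁅a, y⁆ := by
  simp only [qComm, lie_sub, lie_algebra_smul, lie_mul_leibniz]
  module

lemma qComm_lie_qComm (f e : R) :
    qComm q f ⁅qComm q f e, e⁆ = -qComm q ⁅qComm q f e, f⁆ e := by
  rw [eq_neg_iff_add_eq_zero, add_comm, ← lie_qComm, lie_self]

lemma QSerre.lie_qComm_lie_left (hq : q ≠ 0) (hef : QSerre q e f) :
    ⁅qComm q f ⁅qComm q f e, e⁆, e⁆ =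
      q ^ 2 • (qComm q f e * ⁅qComm q f e, e⁆) - q⁻¹ ^ 2 • (⁅qComm q f e, e⁆ * qComm q f e) := by
  have hx := hef.mul_lie_qComm hq
  generalize ⁅qComm q f e, e⁆ = x at hx ⊢
  simp only [qComm, Ring.lie_def]
  linear_combination (norm := skip) q⁻¹ ^ 2 • (hx * f) - q ^ 2 • (f * hx)
  simp only [mul_sub, sub_mul, smul_mul_assoc, mul_smul_comm, mul_assoc]
  match_scalars <;> field_simp <;> ring

lemma QSerre.lie_qComm_lie_right (hq : q ≠ 0) (hfe : QSerre q f e) :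
    ⁅qComm q f ⁅qComm q f e, e⁆, f⁆ =
      q ^ 2 • (⁅qComm q f e, f⁆ * qComm q f e) - q⁻¹ ^ 2 • (qComm q f e * ⁅qComm q f e, f⁆) := by
  rw [qComm_lie_qComm]
  have hx := hfe.mul_lie_qComm' hq
  generalize ⁅qComm q f e, f⁆ = x at hx ⊢
  simp only [qComm, Ring.lie_def]
  linear_combination (norm := skip) hx * e - q⁻¹ ^ 4 • (e * hx)
  simp only [mul_sub, sub_mul, smul_mul_assoc, mul_smul_comm, mul_assoc, neg_mul, mul_neg]
  match_scalars <;> field_simp <;> ring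

-- Computing `⁅y, a⁆` through `a = qComm q f e` returns `-(q² + q⁻²)⁅y, a⁆`.
lemma lie_qComm_lie_self (hq : q ≠ 0) (h3 : q ^ 2 + 1 + q⁻¹ ^ 2 ≠ 0) (hef : QSerre q e f)
    (hfe : QSerre q f e) : ⁅qComm q f ⁅qComm q f e, e⁆, qComm q f e⁆ = 0 := by
  have left := qComm_lie_qComm (q := q) f e
  have deriv := lie_qComm (q := q) (qComm q f ⁅qComm q f e, e⁆) f e
  rw [hef.lie_qComm_lie_left hq, hfe.lie_qComm_lie_right hq] at deriv
  generalize right : qComm q f ⁅qComm q f e, e⁆ = y at left deriv ⊢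
  generalize qComm q f e = a at *
  have scaled : (q ^ 2 + 1 + q⁻¹ ^ 2) • ⁅y, a⁆ = 0 := by
    simp only [qComm, Ring.lie_def] at left right deriv ⊢
    linear_combination (norm := skip) deriv
      - q⁻¹ ^ 2 • (a * left) + q ^ 2 • (left * a)
      - q⁻¹ ^ 2 • (right * a) + q ^ 2 • (a * right)
    simp only [mul_sub, sub_mul, smul_mul_assoc, mul_smul_comm, mul_assoc, neg_mul, mul_neg]
    match_scalars <;> field_simp <;> ring
  exact (smul_eq_zero.mp scaled).resolve_left h3

theorem QSerre.straightening (hq : q ≠ 0) (h2 : (2 : K) ≠ 0) (h3 : q ^ 2 + 1 + q⁻¹ ^ 2 ≠ 0)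
    (h4 : q ^ 2 + q⁻¹ ^ 2 ≠ 0) (hef : QSerre q e f) (hfe : QSerre q f e)
    (ha : a = qComm q f e) :
    Straightening q ![e, ⁅a, e⁆, ⁅a, ⁅a, e⁆⁆, ⁅a, ⁅a, ⁅a, e⁆⁆⁆] := by
  have hy : ⁅qComm q f ⁅a, e⁆, a⁆ = 0 := ha ▸ lie_qComm_lie_self hq h3 hef hfe
  have hye := hef.lie_qComm_lie_left hq
  rw [← ha] at hye
  refine .of_ad (b := qComm q f ⁅a, e⁆ + ((q⁻¹ ^ 2 - q ^ 2) / 2) • (a * a)) hq h2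
    (div_ne_zero h4 h2) ?_ ?_ (ha ▸ hef.mul_lie_qComm hq)
  · rw [add_lie, hy, smul_lie, Ring.lie_def, mul_assoc, sub_self, smul_zero, zero_add]
  · rw [add_lie, hye, smul_lie]
    simp only [Ring.lie_def, mul_sub, sub_mul, mul_assoc]
    match_scalars <;> field_simp <;> ring

end Serre

/-- The relations between `u₀, …, u₃` and the quantum minors `p₁`, `z`, `p₀` of the Hankel matrix
with rows `(u₃, u₂, u₁)` and `(u₂, u₁, u₀)`. -/
structure MinorRelations {K R : Type*} [Field K] [Ring R] [Algebra K R] (q : K) (u : Fin 4 → R)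
    (p₁ p₀ z : R) : Prop extends Straightening q u where
  u3_mul_u1 : u 3 * u 1 = p₁ + q ^ 2 • (u 2 * u 2)
  u2_mul_u0 : u 2 * u 0 = p₀ + q ^ 2 • (u 1 * u 1)
  u3_mul_u0 : u 3 * u 0 = z + q ^ 2 • (u 2 * u 1)
  p₀_mul_u0 : p₀ * u 0 = q ^ 2 • (u 0 * p₀)
  p₀_mul_u1 : p₀ * u 1 = u 1 * p₀
  p₀_mul_u2 : p₀ * u 2 = q⁻¹ ^ 2 • (u 2 * p₀)
  p₀_mul_u3 : p₀ * u 3 = q⁻¹ ^ 4 • (u 3 * p₀)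
  p₁_mul_u1 : p₁ * u 1 = q ^ 2 • (u 1 * p₁)
  p₁_mul_u2 : p₁ * u 2 = u 2 * p₁
  p₁_mul_u3 : p₁ * u 3 = q⁻¹ ^ 2 • (u 3 * p₁)
  p₀_mul_p₁ : p₀ * p₁ = q⁻¹ ^ 4 • (p₁ * p₀)
  p₁_mul_z : p₁ * z = q ^ 2 • (z * p₁)
  p₀_mul_z : p₀ * z = q⁻¹ ^ 2 • (z * p₀)
  z_mul_u1 : z * u 1 = q ^ 2 • (u 0 * p₁) + u 2 * p₀
  z_mul_u2 : z * u 2 = q⁻¹ ^ 2 • (u 3 * p₀) + u 1 * p₁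
  z_mul_u3 : z * u 3 = q⁻¹ ^ 2 • (u 3 * z) + (q⁻¹ ^ 2 - 1) • (p₁ * u 2)
  z_mul_p₁_mul_u2 : z * (p₁ * u 2) =
    q⁻¹ ^ 4 • (p₁ * u 2 * z) + (q⁻¹ ^ 6 - q⁻¹ ^ 8) • (u 3 * (p₁ * p₀))

/-- The Lucas sequence `0, 1, z, z² - d, …` with recursion `tₙ₊₂ = z tₙ₊₁ - d tₙ`. -/
def lucasSeq {R : Type*} [Ring R] (z d : R) : ℕ → R
  | 0 => 0
  | 1 => 1
  | n + 2 => z * lucasSeq z d (n + 1) - d * lucasSeq z d n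

section Lucas

variable {R : Type*} [Ring R] {x z d : R}

@[simp] lemma lucasSeq_zero (z d : R) : lucasSeq z d 0 = 0 := rfl

@[simp] lemma lucasSeq_one (z d : R) : lucasSeq z d 1 = 1 := rfl

lemma lucasSeq_add_two (z d : R) (n : ℕ) :
    lucasSeq z d (n + 2) = z * lucasSeq z d (n + 1) - d * lucasSeq z d n := rfl

lemma commute_lucasSeq (hz : Commute x z) (hd : Commute x d) (n : ℕ) :
    Commute x (lucasSeq z d n) := by
  induction n using Nat.twoStepInduction with
  | zero => exact Commute.zero_right x
  | one => exact Commute.one_right x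
  | more n ih ih' => exact (hz.mul_right ih').sub_right (hd.mul_right ih)

lemma lucasSeq_add_two' (h : Commute z d) (n : ℕ) :
    lucasSeq z d (n + 2) = lucasSeq z d (n + 1) * z - lucasSeq z d n * d := by
  rw [lucasSeq_add_two, (commute_lucasSeq (Commute.refl z) h _).eq,
    (commute_lucasSeq h.symm (Commute.refl d) _).eq]

end Lucas

section Minors

variable {K : Type*} [Field K] {R : Type*} [Ring R] [Algebra K R]

/-- The Lucas sequence in the minors; its term of index `n + 1` is a power of `q` times the dual
canonical basis element `B[n,0,0,n]`. -/
def minorSeq (q : K) (p₁ p₀ z : R) : ℕ → R := lucasSeq z (q⁻¹ ^ 2 • (p₁ * p₀))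

/-- A power of `q` times the dual canonical basis element `B[n+1,0,0,n]`. -/
def oddSeq (q : K) (u : Fin 4 → R) (p₁ p₀ z : R) (n : ℕ) : R :=
  u 3 * minorSeq q p₁ p₀ z (n + 1) - q ^ 2 • (p₁ * u 2 * minorSeq q p₁ p₀ z n)

variable {q : K} {u : Fin 4 → R} {p₁ p₀ z : R}

lemma minorSeq_add_two (n : ℕ) : minorSeq q p₁ p₀ z (n + 2) =
    z * minorSeq q p₁ p₀ z (n + 1) - q⁻¹ ^ 2 • (p₁ * p₀ * minorSeq q p₁ p₀ z n) := by
  simp only [minorSeq, lucasSeq_add_two, smul_mul_assoc]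

lemma Straightening.minorRelations (h : Straightening q u) :
    MinorRelations q u (u 3 * u 1 - q ^ 2 • u 2 ^ 2) (u 2 * u 0 - q ^ 2 • u 1 ^ 2)
      (u 3 * u 0 - q ^ 2 • (u 2 * u 1)) := by
  have hq := h.q_ne_zero
  have left_mul {x y r : R} (e : x * y = r) (w : R) : x * (y * w) = r * w := by
    rw [← mul_assoc, e]
  constructor
  case toStraightening => exact h
  case u3_mul_u1 | u2_mul_u0 | u3_mul_u0 => simp [pow_two]
  all_goals
    simp only [pow_two (u _), mul_sub, sub_mul, smul_mul_assoc, mul_smul_comm, mul_assoc,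
      h.u0_mul_u1, h.u1_mul_u2, h.u2_mul_u3, h.u0_mul_u2, h.u1_mul_u3, h.u0_mul_u3,
      left_mul h.u0_mul_u1, left_mul h.u1_mul_u2, left_mul h.u2_mul_u3, left_mul h.u0_mul_u2,
      left_mul h.u1_mul_u3, left_mul h.u0_mul_u3] <;>
    (match_scalars <;> field_simp <;> ring)

namespace MinorRelations

lemma commute_p₁_mul_p₀_z (h : MinorRelations q u p₁ p₀ z) : Commute (p₁ * p₀) z := by
  have hq := h.q_ne_zero
  rw [Commute, SemiconjBy, mul_assoc, h.p₀_mul_z, mul_smul_comm, ← mul_assoc, h.p₁_mul_z,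
    smul_mul_assoc, smul_smul, mul_assoc, ← mul_pow, inv_mul_cancel₀ hq, one_pow, one_smul]

lemma minorSeq_add_two' (h : MinorRelations q u p₁ p₀ z) (n : ℕ) : minorSeq q p₁ p₀ z (n + 2) =
    minorSeq q p₁ p₀ z (n + 1) * z - q⁻¹ ^ 2 • (minorSeq q p₁ p₀ z n * (p₁ * p₀)) := by
  rw [minorSeq, lucasSeq_add_two' (h.commute_p₁_mul_p₀_z.symm.smul_right _), mul_smul_comm]

lemma commute_p₁_mul_p₀_minorSeq (h : MinorRelations q u p₁ p₀ z) (n : ℕ) :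
    Commute (p₁ * p₀) (minorSeq q p₁ p₀ z n) :=
  commute_lucasSeq h.commute_p₁_mul_p₀_z ((Commute.refl _).smul_right _) n

lemma p₁_mul_p₀_mul_u3 (h : MinorRelations q u p₁ p₀ z) :
    p₁ * p₀ * u 3 = q⁻¹ ^ 6 • (u 3 * (p₁ * p₀)) := by
  rw [mul_assoc, h.p₀_mul_u3, mul_smul_comm, ← mul_assoc, h.p₁_mul_u3, smul_mul_assoc, mul_assoc,
    smul_smul, ← pow_add]

lemma p₁_mul_p₀_mul_p₁_mul_u2 (h : MinorRelations q u p₁ p₀ z) :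
    p₁ * p₀ * (p₁ * u 2) = q⁻¹ ^ 6 • (p₁ * u 2 * (p₁ * p₀)) := by
  rw [mul_assoc, ← mul_assoc p₀, h.p₀_mul_p₁, smul_mul_assoc, mul_assoc p₁ p₀, h.p₀_mul_u2,
    mul_smul_comm, mul_smul_comm, mul_smul_comm, smul_smul, ← pow_add, mul_assoc p₁ (u 2),
    ← mul_assoc (u 2), ← h.p₁_mul_u2, mul_assoc p₁ (u 2)]

lemma p₁_mul_p₀_mul_oddSeq (h : MinorRelations q u p₁ p₀ z) (n : ℕ) :
    p₁ * p₀ * oddSeq q u p₁ p₀ z n = q⁻¹ ^ 6 • (oddSeq q u p₁ p₀ z n * (p₁ * p₀)) := by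
  simp only [oddSeq, mul_sub, sub_mul, mul_smul_comm, smul_mul_assoc]
  rw [mul_assoc (u 3), mul_assoc (p₁ * u 2), ← (h.commute_p₁_mul_p₀_minorSeq _).eq,
    ← (h.commute_p₁_mul_p₀_minorSeq _).eq, ← mul_assoc (p₁ * p₀), h.p₁_mul_p₀_mul_u3,
    ← mul_assoc (p₁ * p₀), h.p₁_mul_p₀_mul_p₁_mul_u2]
  simp only [smul_mul_assoc, mul_assoc]
  module

lemma z_mul_oddSeq_succ (h : MinorRelations q u p₁ p₀ z) (n : ℕ) :
    z * oddSeq q u p₁ p₀ z (n + 1) =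
      q⁻¹ ^ 2 • oddSeq q u p₁ p₀ z (n + 2) + q⁻¹ ^ 6 • (oddSeq q u p₁ p₀ z n * (p₁ * p₀)) := by
  have hq := h.q_ne_zero
  simp only [oddSeq, mul_sub, sub_mul, mul_smul_comm, smul_mul_assoc]
  rw [mul_assoc (u 3) _ (p₁ * p₀), mul_assoc (p₁ * u 2) _ (p₁ * p₀),
    ← (h.commute_p₁_mul_p₀_minorSeq _).eq, ← (h.commute_p₁_mul_p₀_minorSeq _).eq, ← mul_assoc z,
    h.z_mul_u3, ← mul_assoc z, h.z_mul_p₁_mul_u2, minorSeq_add_two (n + 1), minorSeq_add_two n]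
  simp only [add_mul, mul_sub, smul_mul_assoc, mul_smul_comm, mul_assoc]
  match_scalars <;> field_simp <;> ring

lemma oddSeq_add_two (h : MinorRelations q u p₁ p₀ z) (n : ℕ) : oddSeq q u p₁ p₀ z (n + 2) =
    q ^ 2 • (z * oddSeq q u p₁ p₀ z (n + 1) - p₁ * p₀ * oddSeq q u p₁ p₀ z n) := by
  have hq := h.q_ne_zero
  rw [h.z_mul_oddSeq_succ, h.p₁_mul_p₀_mul_oddSeq]
  match_scalars <;> field_simp
  ring

lemma oddSeq_eq (h : MinorRelations q u p₁ p₀ z) (n : ℕ) : oddSeq q u p₁ p₀ z n =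
    q ^ (2 * n) • (minorSeq q p₁ p₀ z (n + 1) * u 3
      - q⁻¹ ^ 2 • (minorSeq q p₁ p₀ z n * (p₁ * u 2))) := by
  have hq := h.q_ne_zero
  induction n using Nat.twoStepInduction with
  | zero => simp [oddSeq, minorSeq]
  | one =>
    simp only [oddSeq, minorSeq, lucasSeq_one, lucasSeq_zero, lucasSeq_add_two, Nat.reduceAdd,
      mul_one, one_mul, mul_zero, sub_zero, h.z_mul_u3]
    match_scalars <;> field_simp
    ring
  | more n ih ih' =>
    rw [h.oddSeq_add_two, ih, ih', minorSeq_add_two (n + 1), minorSeq_add_two n]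
    simp only [mul_sub, sub_mul, smul_mul_assoc, mul_smul_comm, mul_assoc]
    match_scalars <;> field_simp <;> ring

lemma oddSeq_mul_p₀ (h : MinorRelations q u p₁ p₀ z) (n : ℕ) : oddSeq q u p₁ p₀ z n * p₀ =
    q ^ (2 * (n + 1)) • (minorSeq q p₁ p₀ z (n + 2) * u 2
      - q⁻¹ ^ 2 • (minorSeq q p₁ p₀ z (n + 1) * (p₁ * u 1))) := by
  have hq := h.q_ne_zero
  rw [h.oddSeq_eq, h.minorSeq_add_two', h.p₁_mul_u1]
  simp only [sub_mul, smul_mul_assoc, mul_assoc, h.z_mul_u2, h.p₀_mul_u2, mul_add, mul_smul_comm]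
  match_scalars <;> field_simp <;> ring

theorem oddSeq_mul_u0_sub (h : MinorRelations q u p₁ p₀ z) (n : ℕ) :
    oddSeq q u p₁ p₀ z (n + 1) * u 0 - q ^ 2 • (oddSeq q u p₁ p₀ z n * (u 1 * p₀)) =
      q ^ (2 * (n + 1)) • minorSeq q p₁ p₀ z (n + 3) := by
  have hq := h.q_ne_zero
  rw [← h.p₀_mul_u1, ← mul_assoc (oddSeq q u p₁ p₀ z n), h.oddSeq_mul_p₀, h.oddSeq_eq,
    h.minorSeq_add_two' (n + 1)]
  simp only [sub_mul, smul_mul_assoc, mul_assoc, h.u3_mul_u0, h.u2_mul_u0, mul_add, mul_smul_comm]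
  match_scalars <;> field_simp <;> ring

end MinorRelations

end Minors

section BoxSum

/-- The sequence `0, f 0, f 1, …`. -/
def shift {A : Type*} [Zero A] (f : ℕ → A) : ℕ → A
  | 0 => 0
  | n + 1 => f n

@[simp] lemma shift_zero {A : Type*} [Zero A] (f : ℕ → A) : shift f 0 = 0 := rfl

@[simp] lemma shift_succ {A : Type*} [Zero A] (f : ℕ → A) (n : ℕ) : shift f (n + 1) = f n := rfl

@[simp] lemma zero_shift {A : Type*} [Zero A] (n : ℕ) : shift (0 : ℕ → A) n = 0 := by
  cases n <;> rfl

variable {K M : Type*} [CommRing K] [AddCommGroup M] [Module K M]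

/-- The linear combination of the `g k l`, `k, l ≤ n`, with coefficients `c k l`. -/
def boxSum (n : ℕ) (c : ℕ → ℕ → K) (g : ℕ → ℕ → M) : M :=
  ∑ k ∈ Finset.range (n + 1), ∑ l ∈ Finset.range (n + 1), c k l • g k l

lemma boxSum_congr {n : ℕ} {c : ℕ → ℕ → K} {g g' : ℕ → ℕ → M}
    (h : ∀ k ≤ n, ∀ l ≤ n, g k l = g' k l) : boxSum n c g = boxSum n c g' :=
  Finset.sum_congr rfl fun k hk => Finset.sum_congr rfl fun l hl => by
    rw [h k (Finset.mem_range_succ_iff.1 hk) l (Finset.mem_range_succ_iff.1 hl)]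

lemma boxSum_coeff_add (n : ℕ) (c c' : ℕ → ℕ → K) (g : ℕ → ℕ → M) :
    boxSum n (fun k l => c k l + c' k l) g = boxSum n c g + boxSum n c' g := by
  simp only [boxSum, add_smul, Finset.sum_add_distrib]

lemma boxSum_coeff_sub (n : ℕ) (c c' : ℕ → ℕ → K) (g : ℕ → ℕ → M) :
    boxSum n (fun k l => c k l - c' k l) g = boxSum n c g - boxSum n c' g := by
  simp only [boxSum, sub_smul, Finset.sum_sub_distrib]

lemma boxSum_add (n : ℕ) (c : ℕ → ℕ → K) (g g' : ℕ → ℕ → M) :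
    boxSum n c (fun k l => g k l + g' k l) = boxSum n c g + boxSum n c g' := by
  simp only [boxSum, smul_add, Finset.sum_add_distrib]

lemma boxSum_coeff_mul (n : ℕ) (w c : ℕ → ℕ → K) (g : ℕ → ℕ → M) :
    boxSum n (fun k l => w k l * c k l) g = boxSum n c fun k l => w k l • g k l := by
  simp only [boxSum, smul_smul, mul_comm]

lemma smul_boxSum (n : ℕ) (a : K) (c : ℕ → ℕ → K) (g : ℕ → ℕ → M) :
    a • boxSum n c g = boxSum n c fun k l => a • g k l := by
  simp only [boxSum, Finset.smul_sum, smul_comm a]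

lemma mul_boxSum_mul {R : Type*} [Ring R] [Algebra K R] (n : ℕ) (c : ℕ → ℕ → K) (g : ℕ → ℕ → R)
    (x y : R) : x * boxSum n c g * y = boxSum n c fun k l => x * g k l * y := by
  simp only [boxSum, Finset.mul_sum, Finset.sum_mul, mul_smul_comm, smul_mul_assoc]

variable {n : ℕ} {c : ℕ → ℕ → K}

lemma shift_left_eq_zero (hc : ∀ k l, n < k + l → c k l = 0) (k l : ℕ) (hkl : n + 1 < k + l) :
    shift c k l = 0 := by
  cases k with
  | zero => rfl
  | succ k => exact hc k l (by omega)

lemma shift_right_eq_zero (hc : ∀ k l, n < k + l → c k l = 0) (k l : ℕ) (hkl : n + 1 < k + l) :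
    shift (c k) l = 0 := by
  cases l with
  | zero => rfl
  | succ l => exact hc k l (by omega)

lemma boxSum_swap (n : ℕ) (c : ℕ → ℕ → K) (g : ℕ → ℕ → M) :
    boxSum n (fun k l => c l k) (fun k l => g l k) = boxSum n c g :=
  Finset.sum_comm

lemma boxSum_succ (hc : ∀ k l, n < k + l → c k l = 0) (g : ℕ → ℕ → M) :
    boxSum (n + 1) c g = boxSum n c g := by
  rw [boxSum, Finset.sum_range_succ, Finset.sum_eq_zero (s := Finset.range (n + 1 + 1))
    fun l _ => by rw [hc (n + 1) l (by omega), zero_smul], add_zero]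
  refine Finset.sum_congr rfl fun k _ => ?_
  rw [Finset.sum_range_succ, hc k (n + 1) (by omega), zero_smul, add_zero]

lemma boxSum_shift_left (hc : ∀ k l, n < k + l → c k l = 0) (g : ℕ → ℕ → M) :
    boxSum (n + 1) (shift c) g = boxSum n c fun k l => g (k + 1) l := by
  rw [boxSum, Finset.sum_range_succ']
  simp only [shift_succ, shift_zero, Pi.zero_apply, zero_smul, Finset.sum_const_zero, add_zero]
  refine Finset.sum_congr rfl fun k _ => ?_
  rw [Finset.sum_range_succ, hc k (n + 1) (by omega), zero_smul, add_zero]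

lemma boxSum_shift_right (hc : ∀ k l, n < k + l → c k l = 0) (g : ℕ → ℕ → M) :
    boxSum (n + 1) (fun k => shift (c k)) g = boxSum n c fun k l => g k (l + 1) := by
  have hc' (k l : ℕ) (hkl : n < k + l) : c l k = 0 := hc l k (by omega)
  have shift_swap : (fun k l => shift (c l) k) = shift fun k l => c l k := by
    ext k l
    cases k <;> rfl
  rw [← boxSum_swap, shift_swap, boxSum_shift_left hc', boxSum_swap n c fun k l => g k (l + 1)]

lemma boxSum_shift_shift (hc : ∀ k l, n < k + l → c k l = 0) (g : ℕ → ℕ → M) :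
    boxSum (n + 2) (fun k => shift (shift c k)) g =
      boxSum n c fun k l => g (k + 1) (l + 1) := by
  rw [boxSum_shift_right (shift_left_eq_zero hc), boxSum_shift_left hc]

end BoxSum

section Expansion

variable {K : Type*} [Field K] {R : Type*} [Ring R] [Algebra K R]

lemma pow_mul_eq_smul {t : K} {x y : R} (h : x * y = t • (y * x)) (n : ℕ) :
    x ^ n * y = t ^ n • (y * x ^ n) := by
  induction n with
  | zero => simp
  | succ n ih =>
    rw [pow_succ', mul_assoc, ih, mul_smul_comm, ← mul_assoc, h, smul_mul_assoc, smul_smul,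
      mul_assoc, ← pow_succ]

lemma mul_pow_eq_smul {t : K} {x y : R} (h : x * y = t • (y * x)) (n : ℕ) :
    x * y ^ n = t ^ n • (y ^ n * x) := by
  induction n with
  | zero => simp
  | succ n ih =>
    rw [pow_succ, ← mul_assoc, ih, smul_mul_assoc, mul_assoc, h, mul_smul_comm, smul_smul,
      ← mul_assoc, ← pow_succ]

/-- The monomials `p₁^(n-k) u₂^(2k) u₁^(2l) p₀^(n-l)` of the expansion, for `k, l ≤ n`. -/
def minorMon (u : Fin 4 → R) (p₁ p₀ : R) (n k l : ℕ) : R :=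
  p₁ ^ (n - k) * u 2 ^ (2 * k) * u 1 ^ (2 * l) * p₀ ^ (n - l)

variable {q : K} {u : Fin 4 → R} {p₁ p₀ z : R}

namespace MinorRelations

lemma u1_mul_p₁ (h : MinorRelations q u p₁ p₀ z) : u 1 * p₁ = q⁻¹ ^ 2 • (p₁ * u 1) := by
  rw [h.p₁_mul_u1, smul_smul, ← mul_pow, inv_mul_cancel₀ h.q_ne_zero, one_pow, one_smul]

lemma commute_u1_u0_mul_p₁ (h : MinorRelations q u p₁ p₀ z) : Commute (u 1) (u 0 * p₁) := by
  have hq := h.q_ne_zero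
  rw [Commute, SemiconjBy, mul_assoc, h.p₁_mul_u1, mul_smul_comm, ← mul_assoc (u 0), h.u0_mul_u1,
    smul_mul_assoc, smul_smul, ← mul_pow, mul_inv_cancel₀ hq, one_pow, one_smul, mul_assoc]

lemma p₀_mul_u0_mul_p₁ (h : MinorRelations q u p₁ p₀ z) :
    p₀ * (u 0 * p₁) = q⁻¹ ^ 2 • (u 0 * p₁ * p₀) := by
  have hq := h.q_ne_zero
  rw [← mul_assoc, h.p₀_mul_u0, smul_mul_assoc, mul_assoc, h.p₀_mul_p₁, mul_smul_comm, ← mul_assoc]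
  match_scalars
  field_simp

lemma u2_mul_u0_mul_p₁ (h : MinorRelations q u p₁ p₀ z) :
    u 2 * (u 0 * p₁) = p₁ * (q⁻¹ ^ 4 • p₀ + q⁻¹ ^ 2 • u 1 ^ 2) := by
  have hq := h.q_ne_zero
  rw [← mul_assoc, h.u2_mul_u0, ← pow_two, add_mul, smul_mul_assoc, h.p₀_mul_p₁,
    pow_mul_eq_smul h.u1_mul_p₁, mul_add, mul_smul_comm, mul_smul_comm]
  match_scalars <;> field_simp

lemma u2_pow_mul_mon (h : MinorRelations q u p₁ p₀ z) (i a b : ℕ) :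
    u 2 ^ i * (p₁ ^ a * u 2 ^ b) = p₁ ^ a * u 2 ^ b * u 2 ^ i := by
  have : Commute (u 2) p₁ := h.p₁_mul_u2.symm
  exact ((this.pow_pow i a).mul_right (Commute.pow_pow_self _ i b)).eq

lemma mon_mul_p₁ (h : MinorRelations q u p₁ p₀ z) (a b : ℕ) :
    p₁ ^ a * u 2 ^ b * p₁ = p₁ ^ (a + 1) * u 2 ^ b := by
  have : Commute p₁ (u 2) := h.p₁_mul_u2
  rw [mul_assoc, ← (this.pow_right b).eq, ← mul_assoc, ← pow_succ]

lemma u2_mul_mon_mul_u0_mul_p₁ (h : MinorRelations q u p₁ p₀ z) (a b c d : ℕ) :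
    u 2 * (p₁ ^ a * u 2 ^ b * u 1 ^ c * p₀ ^ d) * (u 0 * p₁) =
      q⁻¹ ^ (2 * d + 4) • (p₁ ^ (a + 1) * u 2 ^ b * u 1 ^ c * p₀ ^ (d + 1))
      + q⁻¹ ^ (2 * d + 2) • (p₁ ^ (a + 1) * u 2 ^ b * u 1 ^ (c + 2) * p₀ ^ d) := by
  have p₀_comm : Commute p₀ (u 1 ^ c) := (show Commute p₀ (u 1) from h.p₀_mul_u1).pow_right c
  calc u 2 * (p₁ ^ a * u 2 ^ b * u 1 ^ c * p₀ ^ d) * (u 0 * p₁)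
    _ = u 2 ^ 1 * (p₁ ^ a * u 2 ^ b) * (u 1 ^ c * (p₀ ^ d * (u 0 * p₁))) := by
      simp only [pow_one, mul_assoc]
    _ = q⁻¹ ^ (2 * d) • (p₁ ^ a * u 2 ^ b * (u 2 * (u 0 * p₁)) * (u 1 ^ c * p₀ ^ d)) := by
      rw [h.u2_pow_mul_mon, pow_mul_eq_smul h.p₀_mul_u0_mul_p₁, mul_smul_comm,
        ← mul_assoc (u 1 ^ c), (h.commute_u1_u0_mul_p₁.pow_left c).eq, ← pow_mul]
      simp only [pow_one, mul_smul_comm, mul_assoc]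
    _ = q⁻¹ ^ (2 * d) • (p₁ ^ (a + 1) * u 2 ^ b *
          ((q⁻¹ ^ 4 • p₀ + q⁻¹ ^ 2 • u 1 ^ 2) * (u 1 ^ c * p₀ ^ d))) := by
      rw [h.u2_mul_u0_mul_p₁, ← mul_assoc _ p₁, h.mon_mul_p₁, mul_assoc]
    _ = _ := by
      rw [add_mul, smul_mul_assoc, smul_mul_assoc, ← mul_assoc p₀, p₀_comm.eq, mul_assoc _ p₀,
        ← pow_succ', ← mul_assoc (u 1 ^ 2), ← pow_add, add_comm 2 c]
      simp only [mul_add, mul_smul_comm, mul_assoc]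
      module

lemma u2_mul_mon_mul_u2_mul_p₀ (h : MinorRelations q u p₁ p₀ z) (a b c d : ℕ) :
    u 2 * (p₁ ^ a * u 2 ^ b * u 1 ^ c * p₀ ^ d) * (u 2 * p₀) =
      q⁻¹ ^ (2 * c + 2 * d) • (p₁ ^ a * u 2 ^ (b + 2) * u 1 ^ c * p₀ ^ (d + 1)) := by
  calc u 2 * (p₁ ^ a * u 2 ^ b * u 1 ^ c * p₀ ^ d) * (u 2 * p₀)
    _ = u 2 ^ 1 * (p₁ ^ a * u 2 ^ b) * (u 1 ^ c * (p₀ ^ d * u 2) * p₀) := by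
      simp only [pow_one, mul_assoc]
    _ = _ := by
      rw [h.u2_pow_mul_mon, pow_mul_eq_smul h.p₀_mul_u2, mul_smul_comm, ← mul_assoc (u 1 ^ c),
        pow_mul_eq_smul h.u1_mul_u2, ← pow_mul, ← pow_mul]
      simp only [smul_mul_assoc, mul_smul_comm, smul_smul, pow_succ, pow_zero, one_mul, pow_add,
        mul_assoc]
      module

lemma u2_sq_mul_mon_mul_u1_sq_mul_p₁_mul_p₀ (h : MinorRelations q u p₁ p₀ z) (a b c d : ℕ) :
    u 2 ^ 2 * (p₁ ^ a * u 2 ^ b * u 1 ^ c * p₀ ^ d) * (u 1 ^ 2 * (p₁ * p₀)) =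
      q⁻¹ ^ (2 * c + 4 * d + 4) •
        (p₁ ^ (a + 1) * u 2 ^ (b + 2) * u 1 ^ (c + 2) * p₀ ^ (d + 1)) := by
  have p₀_comm : Commute p₀ (u 1) := h.p₀_mul_u1
  calc u 2 ^ 2 * (p₁ ^ a * u 2 ^ b * u 1 ^ c * p₀ ^ d) * (u 1 ^ 2 * (p₁ * p₀))
    _ = u 2 ^ 2 * (p₁ ^ a * u 2 ^ b) * (u 1 ^ c * (p₀ ^ d * u 1 ^ 2) * (p₁ * p₀)) := by
      simp only [mul_assoc]
    _ = p₁ ^ a * u 2 ^ (b + 2) * (u 1 ^ (c + 2) * (p₀ ^ d * p₁) * p₀) := by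
      rw [h.u2_pow_mul_mon, (p₀_comm.pow_pow d 2).eq, mul_assoc (p₁ ^ a), ← pow_add]
      simp only [pow_add, mul_assoc]
    _ = (q⁻¹ ^ (4 * d) * q⁻¹ ^ (2 * (c + 2))) •
          (p₁ ^ a * u 2 ^ (b + 2) * p₁ * (u 1 ^ (c + 2) * (p₀ ^ d * p₀))) := by
      rw [pow_mul_eq_smul h.p₀_mul_p₁, mul_smul_comm, ← mul_assoc (u 1 ^ (c + 2)),
        pow_mul_eq_smul h.u1_mul_p₁, ← pow_mul, ← pow_mul]
      simp only [smul_mul_assoc, mul_smul_comm, smul_smul, mul_assoc]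
    _ = _ := by
      rw [h.mon_mul_p₁, ← pow_succ, ← pow_add, mul_assoc _ (u 1 ^ _)]
      congr 2
      ring

lemma u2_mul_minorMon_mul (h : MinorRelations q u p₁ p₀ z) {n k l : ℕ} (hk : k ≤ n) (hl : l ≤ n) :
    u 2 * minorMon u p₁ p₀ n k l * (q ^ 2 • (u 0 * p₁) + q ^ (2 * n) • (u 2 * p₀)) =
      q ^ (2 * l - 2 * (n + 1) : ℤ) • minorMon u p₁ p₀ (n + 1) k l
      + q ^ (2 * (l + 1 : ℕ) - 2 * (n + 1) : ℤ) • minorMon u p₁ p₀ (n + 1) k (l + 1)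
      + q ^ (-2 * l : ℤ) • minorMon u p₁ p₀ (n + 1) (k + 1) l := by
  have hq := h.q_ne_zero
  simp only [minorMon]
  rw [mul_add, mul_smul_comm, mul_smul_comm, h.u2_mul_mon_mul_u0_mul_p₁,
    h.u2_mul_mon_mul_u2_mul_p₀, Nat.sub_add_comm hk, Nat.sub_add_comm hl, Nat.add_sub_add_right,
    Nat.add_sub_add_right, smul_add, smul_smul, smul_smul, smul_smul, mul_add_one, mul_add_one]
  obtain ⟨j, rfl⟩ := Nat.exists_eq_add_of_le hl
  simp only [Nat.add_sub_cancel_left, ← zpow_natCast, inv_zpow', ← zpow_add₀ hq]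
  congr 3 <;> push_cast <;> ring_nf

lemma u2_sq_mul_minorMon_mul (h : MinorRelations q u p₁ p₀ z) {n k l : ℕ} (hk : k ≤ n)
    (hl : l ≤ n) : u 2 ^ 2 * minorMon u p₁ p₀ n k l * (u 1 ^ 2 * (p₁ * p₀)) =
      q⁻¹ ^ (4 * (n + 1)) • minorMon u p₁ p₀ (n + 2) (k + 1) (l + 1) := by
  simp only [minorMon]
  rw [h.u2_sq_mul_mon_mul_u1_sq_mul_p₁_mul_p₀, show n + 2 - (k + 1) = n - k + 1 by omega,
    show n + 2 - (l + 1) = n - l + 1 by omega, mul_add_one, mul_add_one]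
  congr 2
  omega

lemma z_mul_u1_pow_succ (h : MinorRelations q u p₁ p₀ z) (n : ℕ) :
    z * u 1 ^ (n + 1) = u 1 ^ n * (q ^ 2 • (u 0 * p₁) + q ^ (2 * n) • (u 2 * p₀)) := by
  have hq := h.q_ne_zero
  have u2_mul_u1 : u 2 * u 1 = q ^ 2 • (u 1 * u 2) := by
    rw [h.u1_mul_u2, smul_smul, ← mul_pow, mul_inv_cancel₀ hq, one_pow, one_smul]
  have p₀_comm : Commute p₀ (u 1) := h.p₀_mul_u1
  rw [pow_succ', ← mul_assoc, h.z_mul_u1, add_mul, smul_mul_assoc,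
    ← (h.commute_u1_u0_mul_p₁.pow_left n).eq, mul_assoc (u 2), (p₀_comm.pow_right n).eq,
    ← mul_assoc (u 2), mul_pow_eq_smul u2_mul_u1, ← pow_mul, smul_mul_assoc, mul_assoc, mul_add,
    mul_smul_comm, mul_smul_comm]

lemma p₁_mul_p₀_mul_u1_pow (h : MinorRelations q u p₁ p₀ z) (n : ℕ) :
    p₁ * p₀ * u 1 ^ n = q ^ (2 * n) • (u 1 ^ n * (p₁ * p₀)) := by
  have p₀_comm : Commute p₀ (u 1) := h.p₀_mul_u1
  rw [mul_assoc, (p₀_comm.pow_right n).eq, ← mul_assoc, mul_pow_eq_smul h.p₁_mul_u1, ← pow_mul,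
    smul_mul_assoc, mul_assoc]

variable {n : ℕ} {c : ℕ → ℕ → K} {x : R}

lemma u2_pow_mul_mul_z_mul_u1_pow (h : MinorRelations q u p₁ p₀ z)
    (hc : ∀ k l, n < k + l → c k l = 0)
    (hx : u 2 ^ n * x * u 1 ^ n = boxSum n c (minorMon u p₁ p₀ n)) :
    u 2 ^ (n + 1) * (x * z) * u 1 ^ (n + 1) =
      boxSum (n + 1)
        (fun k l => q ^ (2 * l - 2 * (n + 1) : ℤ) * (c k l + shift (c k) l)
          + q ^ (-2 * l : ℤ) * shift c k l)
        (minorMon u p₁ p₀ (n + 1)) := by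
  calc u 2 ^ (n + 1) * (x * z) * u 1 ^ (n + 1)
    _ = u 2 * (u 2 ^ n * x * u 1 ^ n) * (q ^ 2 • (u 0 * p₁) + q ^ (2 * n) • (u 2 * p₀)) := by
      rw [mul_assoc, mul_assoc x, h.z_mul_u1_pow_succ, pow_succ']
      simp only [mul_assoc]
    _ = boxSum n c (fun k l => q ^ (2 * l - 2 * (n + 1) : ℤ) • minorMon u p₁ p₀ (n + 1) k l)
        + boxSum n c (fun k l =>
            q ^ (2 * (l + 1 : ℕ) - 2 * (n + 1) : ℤ) • minorMon u p₁ p₀ (n + 1) k (l + 1))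
        + boxSum n c fun k l => q ^ (-2 * l : ℤ) • minorMon u p₁ p₀ (n + 1) (k + 1) l := by
      rw [hx, mul_boxSum_mul, boxSum_congr fun k hk l hl => h.u2_mul_minorMon_mul hk hl, boxSum_add,
        boxSum_add]
    _ = _ := by
      simp only [mul_add, boxSum_coeff_add, boxSum_coeff_mul, boxSum_succ hc,
        boxSum_shift_left hc, boxSum_shift_right hc]

lemma u2_pow_mul_mul_p₁_mul_p₀_mul_u1_pow (h : MinorRelations q u p₁ p₀ z)
    (hc : ∀ k l, n < k + l → c k l = 0)
    (hx : u 2 ^ n * x * u 1 ^ n = boxSum n c (minorMon u p₁ p₀ n)) :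
    u 2 ^ (n + 2) * (x * (p₁ * p₀)) * u 1 ^ (n + 2) =
      boxSum (n + 2) (fun k l => q ^ (-2 * n : ℤ) * shift (shift c k) l)
        (minorMon u p₁ p₀ (n + 2)) := by
  have scalar : q ^ (2 * (n + 2)) * q⁻¹ ^ (4 * (n + 1)) = q ^ (-2 * n : ℤ) := by
    rw [← zpow_natCast, ← zpow_natCast, inv_zpow', ← zpow_add₀ h.q_ne_zero]
    congr 1
    push_cast
    ring
  calc u 2 ^ (n + 2) * (x * (p₁ * p₀)) * u 1 ^ (n + 2)
    _ = q ^ (2 * (n + 2)) •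
          (u 2 ^ 2 * (u 2 ^ n * x * u 1 ^ n) * (u 1 ^ 2 * (p₁ * p₀))) := by
      rw [mul_assoc, mul_assoc x, h.p₁_mul_p₀_mul_u1_pow, pow_add (u 1), pow_add (u 2),
        (Commute.pow_pow_self (u 2) n 2).eq]
      simp only [mul_smul_comm, mul_assoc]
    _ = boxSum n c fun k l => q ^ (-2 * n : ℤ) • minorMon u p₁ p₀ (n + 2) (k + 1) (l + 1) := by
      rw [hx, mul_boxSum_mul, boxSum_congr fun k hk l hl => h.u2_sq_mul_minorMon_mul hk hl,
        smul_boxSum]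
      simp only [smul_smul, scalar]
    _ = _ := by rw [boxSum_coeff_mul, boxSum_shift_shift hc]

end MinorRelations

/-- The recursion satisfied by the coefficients of `u₂ⁿ tₙ₊₁ u₁ⁿ` with respect to the monomials
`minorMon`, where `t` is the sequence `minorSeq`. -/
structure IsExpansionCoeff (q : K) (c : ℕ → ℕ → ℕ → K) : Prop where
  eq_zero_of_lt : ∀ n k l, n < k + l → c n k l = 0
  zero_zero_zero : c 0 0 0 = 1
  succ : ∀ n k l, c (n + 1) k l =
    q ^ (2 * l - 2 * (n + 1) : ℤ) * (c n k l + shift (c n k) l)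
      + q ^ (-2 * l : ℤ) * shift (c n) k l - q ^ (-2 * n : ℤ) * shift (shift (shift c n) k) l

theorem MinorRelations.u2_pow_mul_minorSeq_mul_u1_pow (h : MinorRelations q u p₁ p₀ z)
    {c : ℕ → ℕ → ℕ → K} (hc : IsExpansionCoeff q c) (n : ℕ) :
    u 2 ^ n * minorSeq q p₁ p₀ z (n + 1) * u 1 ^ n =
      boxSum n (c n) (minorMon u p₁ p₀ n) := by
  induction n using Nat.twoStepInduction with
  | zero => simp [minorSeq, boxSum, minorMon, hc.zero_zero_zero]
  | one =>
    have expand := h.u2_pow_mul_mul_z_mul_u1_pow (x := 1) (hc.eq_zero_of_lt 0)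
      (by simp [boxSum, minorMon, hc.zero_zero_zero])
    rw [funext₂ (hc.succ 0)]
    simpa [minorSeq, lucasSeq_add_two] using expand
  | more n ih ih' =>
    have scalar : q⁻¹ ^ 2 * q ^ (-2 * n : ℤ) = q ^ (-2 * (n + 1 : ℕ) : ℤ) := by
      rw [← zpow_natCast, inv_zpow', ← zpow_add₀ h.q_ne_zero]
      congr 1
      push_cast
      ring
    rw [h.minorSeq_add_two', mul_sub, sub_mul, mul_smul_comm, smul_mul_assoc,
      h.u2_pow_mul_mul_z_mul_u1_pow (hc.eq_zero_of_lt _) ih',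
      h.u2_pow_mul_mul_p₁_mul_p₀_mul_u1_pow (hc.eq_zero_of_lt _) ih, smul_boxSum,
      ← boxSum_coeff_mul, ← boxSum_coeff_sub, funext₂ (hc.succ (n + 1))]
    simp only [← mul_assoc, scalar, shift_succ]

end Expansion

section Coefficients

open Polynomial

lemma transcendental_qq : Transcendental ℤ qq := by
  have aeval_qq (p : ℤ[X]) : aeval qq p = algebraMap ℚ[X] F (p.map (Int.castRingHom ℚ)) := by
    induction p using Polynomial.induction_on' with
    | add p r hp hr => simp only [map_add, Polynomial.map_add, hp, hr]
    | monomial n c => simp [qq, aeval_monomial]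
  refine transcendental_iff.2 fun p hp => ?_
  rw [aeval_qq, FaithfulSMul.algebraMap_eq_zero_iff] at hp
  exact (Polynomial.map_eq_zero_iff (RingHom.injective_int (Int.castRingHom ℚ))).1 hp

lemma qq_ne_zero : qq ≠ 0 := RatFunc.X_ne_zero

lemma qq_pow_ne_one {m : ℕ} (hm : m ≠ 0) : qq ^ m ≠ 1 := fun h =>
  transcendental_qq (IsAlgebraic.of_pow (Nat.pos_of_ne_zero hm) (h ▸ isAlgebraic_one))

lemma qq_sub_inv_ne_zero : qq - qq⁻¹ ≠ 0 := fun h =>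
  qq_pow_ne_one two_ne_zero (by rw [pow_two, ← mul_inv_cancel₀ qq_ne_zero, ← sub_eq_zero.1 h])

lemma qint_natCast_ne_zero {m : ℕ} (hm : m ≠ 0) : qint m ≠ 0 := by
  refine div_ne_zero (fun h => ?_) qq_sub_inv_ne_zero
  refine qq_pow_ne_one (m := m + m) (by omega) ?_
  rw [zpow_neg, zpow_natCast, sub_eq_zero] at h
  rw [pow_add]
  nth_rw 1 [h]
  exact inv_mul_cancel₀ (pow_ne_zero m qq_ne_zero)

lemma qint_succ_ne_zero (l : ℕ) : qint (l + 1 : ℤ) ≠ 0 := by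
  exact_mod_cast qint_natCast_ne_zero l.succ_ne_zero

lemma qint_add (a b : ℤ) : qint (a + b) = qq ^ a * qint b + qq ^ (-b) * qint a := by
  have hq := qq_ne_zero
  rw [qint, qint, qint, ← mul_div_assoc, ← mul_div_assoc, ← add_div, mul_sub, mul_sub,
    ← zpow_add₀ hq, ← zpow_add₀ hq, ← zpow_add₀ hq, ← zpow_add₀ hq, neg_add, add_comm (-b) a,
    add_comm (-b) (-a)]
  ring

@[simp] lemma qbinom_zero (m : ℤ) : qbinom m 0 = 1 := by simp [qbinom, qfact]

lemma qbinom_succ (m : ℤ) (l : ℕ) :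
    qbinom m (l + 1) = qbinom m l * qint (m - l) / qint (l + 1) := by
  rw [qbinom, qbinom, qfact, qfact, Finset.prod_range_succ, Finset.prod_range_succ]
  have := qint_succ_ne_zero l
  field_simp

lemma qbinom_succ' (m : ℤ) (l : ℕ) :
    qbinom m (l + 1) = qbinom (m - 1) l * qint m / qint (l + 1) := by
  rw [qbinom, qbinom, qfact, qfact, Finset.prod_range_succ', Finset.prod_range_succ, Nat.cast_zero,
    sub_zero, Finset.prod_congr rfl fun j _ => by rw [Nat.cast_succ, add_comm, ← sub_sub]]
  have := qint_succ_ne_zero l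
  field_simp

lemma qbinom_eq_zero {m l : ℕ} (h : m < l) : qbinom m l = 0 := by
  rw [qbinom, Finset.prod_eq_zero (Finset.mem_range.2 h) (by simp [qint]), zero_div]

lemma qbinom_pascal (m : ℤ) (l : ℕ) : qbinom m l =
    qq ^ (l : ℤ) * qbinom (m - 1) l + qq ^ (l - m) * shift (qbinom (m - 1)) l := by
  cases l with
  | zero => simp
  | succ l =>
    have := qint_succ_ne_zero l
    have key := qint_add (l + 1) (m - 1 - l)
    rw [show (l + 1 + (m - 1 - l) : ℤ) = m by ring] at key
    rw [qbinom_succ', qbinom_succ, shift_succ, key]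
    push_cast
    rw [show (l + 1 - m : ℤ) = -(m - 1 - l) by ring]
    field_simp

lemma qbinom_pascal' (m : ℤ) (l : ℕ) : qbinom m l =
    qq ^ (-l : ℤ) * qbinom (m - 1) l + qq ^ (m - l) * shift (qbinom (m - 1)) l := by
  cases l with
  | zero => simp
  | succ l =>
    have := qint_succ_ne_zero l
    have key := qint_add (m - 1 - l) (l + 1)
    rw [show (m - 1 - l + (l + 1) : ℤ) = m by ring] at key
    rw [qbinom_succ', qbinom_succ, shift_succ, key]
    push_cast
    rw [show (m - (l + 1) : ℤ) = m - 1 - l by ring]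
    field_simp
    ring

/-- The coefficient `q^(g(n,k,l) - 2n(n-1)) [n-k; l] [n-l; k]` for `k + l ≤ n`, and `0` otherwise:
the coefficients of the theorem, up to the power of `q` relating `minorSeq` to `B[n,0,0,n]`. -/
def minorCoeff (n k l : ℕ) : F :=
  if k + l ≤ n then
    qq ^ (gexp n k l - 2 * n * (n - 1)) * qbinom (n - k) l * qbinom (n - l) k
  else 0

lemma minorCoeff_of_le_succ {n k l : ℕ} (h : k + l ≤ n + 1) : minorCoeff n k l =
    qq ^ (gexp n k l - 2 * n * (n - 1)) * qbinom (n - k) l * qbinom (n - l) k := by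
  rw [minorCoeff]
  split_ifs with hkl
  · rfl
  obtain - | l := l
  · rw [Nat.cast_zero, sub_zero, qbinom_eq_zero (by omega), mul_zero]
  · obtain rfl : n = k + l := by omega
    rw [Nat.cast_add, add_sub_cancel_left, qbinom_eq_zero l.lt_succ_self, mul_zero, zero_mul]

lemma qq_zpow_mul_shift_minorCoeff_right {n k l : ℕ} (h : k + l ≤ n + 1) :
    qq ^ (2 * l - 2 * (n + 1) : ℤ) * shift (minorCoeff n k) l =
      qq ^ (gexp (n + 1) k l - 2 * (n + 1) * n) * qq ^ (l - (n + 1 - k) : ℤ)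
        * shift (qbinom (n - k)) l * qbinom (n + 1 - l) k := by
  cases l with
  | zero => simp
  | succ l =>
    rw [shift_succ, shift_succ, minorCoeff, if_pos (by omega), ← mul_assoc, ← mul_assoc,
      ← zpow_add₀ qq_ne_zero, ← zpow_add₀ qq_ne_zero]
    simp only [gexp]
    push_cast
    ring_nf

lemma qq_zpow_mul_shift_minorCoeff_left {n k l : ℕ} (h : k + l ≤ n + 1) :
    qq ^ (-2 * l : ℤ) * shift (minorCoeff n) k l =
      qq ^ (gexp (n + 1) k l - 2 * (n + 1) * n) * qq ^ (n + 1 - l - k : ℤ)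
        * qbinom (n + 1 - k) l * shift (qbinom (n - l)) k := by
  cases k with
  | zero => simp
  | succ k =>
    rw [shift_succ, shift_succ, minorCoeff, if_pos (by omega), ← mul_assoc, ← mul_assoc,
      ← zpow_add₀ qq_ne_zero, ← zpow_add₀ qq_ne_zero]
    simp only [gexp]
    push_cast
    ring_nf

lemma qq_zpow_mul_shift_minorCoeff_both {n k l : ℕ} (h : k + l ≤ n + 1) :
    qq ^ (-2 * n : ℤ) * shift (shift (shift minorCoeff n) k) l =
      qq ^ (gexp (n + 1) k l - 2 * (n + 1) * n)
        * (qq ^ (l - (n + 1 - k) : ℤ) * qq ^ (n + 1 - l - k : ℤ))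
        * shift (qbinom (n - k)) l * shift (qbinom (n - l)) k := by
  obtain - | k := k
  · simp
  obtain - | l := l
  · simp
  obtain - | n := n
  · omega
  rw [shift_succ, shift_succ, shift_succ, shift_succ, shift_succ, minorCoeff, if_pos (by omega),
    ← mul_assoc, ← mul_assoc, ← zpow_add₀ qq_ne_zero, ← zpow_add₀ qq_ne_zero,
    ← zpow_add₀ qq_ne_zero]
  simp only [gexp]
  push_cast
  ring_nf

lemma minorCoeff_eq_zero_of_lt (n k l : ℕ) (h : n < k + l) : minorCoeff n k l = 0 :=
  if_neg (by omega)

-- The recursion is the product of the two `q`-Pascal identities for `[n+1-k; l]` and `[n+1-l; k]`.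
lemma minorCoeff_succ_of_le {n k l : ℕ} (h : k + l ≤ n + 1) : minorCoeff (n + 1) k l =
    qq ^ (2 * l - 2 * (n + 1) : ℤ) * (minorCoeff n k l + shift (minorCoeff n k) l)
      + qq ^ (-2 * l : ℤ) * shift (minorCoeff n) k l
      - qq ^ (-2 * n : ℤ) * shift (shift (shift minorCoeff n) k) l := by
  have pascal := qbinom_pascal (n + 1 - k) l
  have pascal' := qbinom_pascal' (n + 1 - l) k
  rw [show (n + 1 - k - 1 : ℤ) = n - k by ring] at pascal
  rw [show (n + 1 - l - 1 : ℤ) = n - l by ring] at pascal'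
  have scalar : qq ^ (2 * l - 2 * (n + 1) : ℤ) * qq ^ (gexp n k l - 2 * n * (n - 1)) =
      qq ^ (gexp (n + 1) k l - 2 * (n + 1) * n) * qq ^ (l : ℤ) * qq ^ (-k : ℤ) := by
    simp only [← zpow_add₀ qq_ne_zero, gexp]
    push_cast
    ring_nf
  rw [mul_add, minorCoeff_of_le_succ h, qq_zpow_mul_shift_minorCoeff_right h,
    qq_zpow_mul_shift_minorCoeff_left h, qq_zpow_mul_shift_minorCoeff_both h, minorCoeff, if_pos h,
    Nat.cast_succ, add_sub_cancel_right]
  linear_combination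
    qq ^ (gexp (n + 1) k l - 2 * (n + 1) * n) * qq ^ (l : ℤ) * qbinom (n - k) l * pascal'
    + qq ^ (gexp (n + 1) k l - 2 * (n + 1) * n)
      * (qbinom (n + 1 - l) k - qq ^ (n + 1 - l - k : ℤ) * shift (qbinom (n - l)) k) * pascal
    - qbinom (n - k) l * qbinom (n - l) k * scalar

lemma isExpansionCoeff_minorCoeff : IsExpansionCoeff qq minorCoeff where
  eq_zero_of_lt := minorCoeff_eq_zero_of_lt
  zero_zero_zero := by simp [minorCoeff, gexp]
  succ n k l := by
    obtain h | h := le_or_gt (k + l) (n + 1)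
    · exact minorCoeff_succ_of_le h
    have shift_shift : shift (shift (shift minorCoeff n) k) l = 0 := by
      cases n with
      | zero => simp
      | succ n =>
        exact shift_right_eq_zero (shift_left_eq_zero (minorCoeff_eq_zero_of_lt n)) k l (by omega)
    rw [minorCoeff_eq_zero_of_lt _ k l h, minorCoeff_eq_zero_of_lt _ k l (by omega),
      shift_right_eq_zero (minorCoeff_eq_zero_of_lt n) k l h,
      shift_left_eq_zero (minorCoeff_eq_zero_of_lt n) k l h, shift_shift]
    ring

end Coefficients

section BarInvolution

variable {K : Type*} [Field K] {R : Type*} [Ring R] [Algebra K R]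

/-- `σ` is a semilinear antiautomorphism lifting the bar involution `q ↦ q⁻¹` of the scalars and
multiplying `uᵢ` by `q²ⁱ`. -/
structure IsBarAntiautomorphism {bar : K →+* K} (σ : R →ₛₗ[bar] R) (q : K) (u : Fin 4 → R) :
    Prop where
  bar_q : bar q = q⁻¹
  map_one : σ 1 = 1
  map_mul (x y : R) : σ (x * y) = σ y * σ x
  map_u (i : Fin 4) : σ (u i) = q ^ (2 * (i : ℕ)) • u i

/-- The multiple of `minorSeq` whose leading term is exactly `E[n,0,0,n]`. -/
def normMinorSeq (q : K) (p₁ p₀ z : R) (n : ℕ) : R :=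
  q ^ (2 * n * (n - 1) : ℤ) • minorSeq q p₁ p₀ z (n + 1)

namespace IsBarAntiautomorphism

variable {bar : K →+* K} {σ : R →ₛₗ[bar] R} {q : K} {u : Fin 4 → R} {p₁ p₀ z : R}

lemma map_p₁ (hσ : IsBarAntiautomorphism σ q u) (h : MinorRelations q u p₁ p₀ z) :
    σ p₁ = q ^ 6 • p₁ := by
  have hq := h.q_ne_zero
  rw [eq_sub_of_add_eq h.u3_mul_u1.symm, map_sub, map_smulₛₗ, hσ.map_mul, hσ.map_mul, map_pow,
    hσ.bar_q, hσ.map_u, hσ.map_u, hσ.map_u]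
  simp only [mul_smul_comm, smul_mul_assoc, h.u1_mul_u3, Fin.coe_ofNat_eq_mod, Nat.reduceMod]
  match_scalars <;> field_simp <;> ring

lemma map_p₀ (hσ : IsBarAntiautomorphism σ q u) (h : MinorRelations q u p₁ p₀ z) :
    σ p₀ = q ^ 2 • p₀ := by
  have hq := h.q_ne_zero
  rw [eq_sub_of_add_eq h.u2_mul_u0.symm, map_sub, map_smulₛₗ, hσ.map_mul, hσ.map_mul, map_pow,
    hσ.bar_q, hσ.map_u, hσ.map_u, hσ.map_u]
  simp only [mul_smul_comm, smul_mul_assoc, h.u0_mul_u2, Fin.coe_ofNat_eq_mod, Nat.reduceMod]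
  match_scalars <;> field_simp <;> ring

lemma map_z (hσ : IsBarAntiautomorphism σ q u) (h : MinorRelations q u p₁ p₀ z) :
    σ z = q ^ 4 • z := by
  have hq := h.q_ne_zero
  rw [eq_sub_of_add_eq h.u3_mul_u0.symm, map_sub, map_smulₛₗ, hσ.map_mul, hσ.map_mul, map_pow,
    hσ.bar_q, hσ.map_u, hσ.map_u, hσ.map_u, hσ.map_u]
  simp only [mul_smul_comm, smul_mul_assoc, h.u0_mul_u3, h.u1_mul_u2, Fin.coe_ofNat_eq_mod,
    Nat.reduceMod]
  match_scalars <;> field_simp <;> ring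

lemma map_p₁_mul_p₀ (hσ : IsBarAntiautomorphism σ q u) (h : MinorRelations q u p₁ p₀ z) :
    σ (p₁ * p₀) = q ^ 4 • (p₁ * p₀) := by
  have hq := h.q_ne_zero
  rw [hσ.map_mul, hσ.map_p₁ h, hσ.map_p₀ h, smul_mul_smul_comm, h.p₀_mul_p₁, smul_smul]
  congr 1
  field_simp

lemma map_minorSeq_succ (hσ : IsBarAntiautomorphism σ q u) (h : MinorRelations q u p₁ p₀ z)
    (n : ℕ) : σ (minorSeq q p₁ p₀ z (n + 1)) = q ^ (4 * n) • minorSeq q p₁ p₀ z (n + 1) := by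
  have hq := h.q_ne_zero
  induction n using Nat.twoStepInduction with
  | zero => simp [minorSeq, hσ.map_one]
  | one => simpa [minorSeq, lucasSeq_add_two] using hσ.map_z h
  | more n ih ih' =>
    nth_rw 1 [minorSeq_add_two]
    rw [map_sub, map_smulₛₗ, hσ.map_mul, hσ.map_mul, ih, ih', hσ.map_z h, hσ.map_p₁_mul_p₀ h,
      h.minorSeq_add_two' (n + 1), map_pow, map_inv₀, hσ.bar_q]
    simp only [smul_mul_smul_comm]
    match_scalars <;> field_simp <;> ring

theorem map_normMinorSeq (hσ : IsBarAntiautomorphism σ q u) (h : MinorRelations q u p₁ p₀ z)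
    (n : ℕ) :
    σ (normMinorSeq q p₁ p₀ z n) = q ^ (-Nnum (n, 0, 0, n)) • normMinorSeq q p₁ p₀ z n := by
  have hq := h.q_ne_zero
  rw [normMinorSeq, map_smulₛₗ, hσ.map_minorSeq_succ h, map_zpow₀, hσ.bar_q, smul_smul, smul_smul,
    inv_zpow', ← zpow_natCast, ← zpow_add₀ hq, ← zpow_add₀ hq]
  congr 2
  simp only [Nnum]
  push_cast
  ring

end IsBarAntiautomorphism

end BarInvolution

section Lattice

open Polynomial

variable {K : Type*} [Field K] {V : Type*} [AddCommGroup V] [Module K V] {ι : Type*}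

/-- The combination `∑ q p_b(q) E_b` with coefficients in `qℤ[q]` attached to a family `p` of
integer polynomials. -/
def qComb (q : K) (E : ι → V) : (ι →₀ ℤ[X]) →+ V :=
  Finsupp.liftAddHom fun b => ((smulAddHom K V).flip (E b)).comp
    ((AddMonoidHom.mulLeft q).comp (eval₂RingHom (Int.castRingHom K) q : ℤ[X] →+ K))

lemma qComb_apply (q : K) (E : ι → V) (φ : ι →₀ ℤ[X]) :
    qComb q E φ = φ.sum fun b p => (q * eval₂ (Int.castRingHom K) q p) • E b := rfl

/-- The lattice `∑_{b ∈ S} qℤ[q] E_b`. -/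
def qLattice (q : K) (E : ι → V) (S : Set ι) : AddSubgroup V :=
  (Finsupp.supported ℤ[X] ℤ[X] S).toAddSubgroup.map (qComb q E)

lemma mem_qLattice {q : K} {E : ι → V} {S : Set ι} {x : V} :
    x ∈ qLattice q E S ↔ ∃ φ : ι →₀ ℤ[X], (φ.support : Set ι) ⊆ S ∧ qComb q E φ = x := Iff.rfl

lemma zpow_smul_mem_qLattice (q : K) (E : ι → V) {S : Set ι} {b : ι} (hb : b ∈ S) {m : ℤ}
    (hm : 1 ≤ m) : q ^ m • E b ∈ qLattice q E S := by
  obtain ⟨k, rfl⟩ := Int.le.dest hm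
  refine ⟨Finsupp.single b (X ^ k), Finsupp.single_mem_supported ℤ[X] _ hb, ?_⟩
  rw [qComb_apply, Finsupp.sum_single_index (by simp), eval₂_X_pow, ← pow_succ',
    ← zpow_natCast, Nat.cast_succ, add_comm]

lemma map_mem_of_mem_qLattice {W : Type*} [AddCommGroup W] [Module K W] {q : K} {E : ι → V}
    {S : Set ι} (G : AddSubgroup W) (f : V →ₗ[K] W)
    (hf : ∀ b ∈ S, ∀ m : ℤ, 1 ≤ m → q ^ m • f (E b) ∈ G) {x : V} (hx : x ∈ qLattice q E S) :
    f x ∈ G := by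
  obtain ⟨φ, hφ, rfl⟩ := hx
  rw [qComb_apply, Finsupp.sum, map_sum]
  refine sum_mem fun b hb => ?_
  rw [map_smul]
  induction φ b using Polynomial.induction_on' with
  | add p r hp hr => rw [eval₂_add, mul_add, add_smul]; exact add_mem hp hr
  | monomial k c =>
    have := zsmul_mem (hf b (hφ hb) (k + 1) (by omega)) c
    rw [← Int.cast_smul_eq_zsmul K, smul_smul] at this
    convert this using 2
    rw [eval₂_monomial, eq_intCast, ← Nat.cast_add_one, zpow_natCast]
    ring

end Lattice

section LeadingTerm

variable {K : Type*} [Field K] {R : Type*} [Ring R] [Algebra K R]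

/-- The dual PBW element `E[a]` built from an arbitrary quadruple `u`. -/
def pbw (q : K) (u : Fin 4 → R) (a : Idx) : R :=
  q ^ bexp a • (u 3 ^ a.1 * u 2 ^ a.2.1 * u 1 ^ a.2.2.1 * u 0 ^ a.2.2.2)

variable {q : K} {u : Fin 4 → R} {p₁ p₀ z : R}

lemma u3_mul_pbw (hq : q ≠ 0) (a b c d : ℕ) :
    u 3 * pbw q u (a, b, c, d) = q ^ (-a : ℤ) • pbw q u (a + 1, b, c, d) := by
  simp only [pbw, mul_smul_comm, smul_smul, pow_succ' (u 3), mul_assoc, ← zpow_natCast,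
    ← zpow_add₀ hq, bexp, Nat.choose_succ_succ' a 1, Nat.choose_one_right]
  congr 2
  push_cast
  ring

lemma pbw_mul_u0 (hq : q ≠ 0) (a b c d : ℕ) :
    pbw q u (a, b, c, d) * u 0 = q ^ (-d : ℤ) • pbw q u (a, b, c, d + 1) := by
  simp only [pbw, smul_mul_assoc, smul_smul, pow_succ (u 0), mul_assoc, ← zpow_natCast,
    ← zpow_add₀ hq, bexp, Nat.choose_succ_succ' d 1, Nat.choose_one_right]
  congr 2
  push_cast
  ring

lemma MinorRelations.p₁_mul_u2_mul_u3_pow (h : MinorRelations q u p₁ p₀ z) (a : ℕ) :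
    p₁ * u 2 * u 3 ^ a = q⁻¹ ^ (4 * a) • (u 3 ^ a * (p₁ * u 2)) := by
  rw [mul_assoc, mul_pow_eq_smul h.u2_mul_u3, mul_smul_comm, ← mul_assoc,
    mul_pow_eq_smul h.p₁_mul_u3, smul_mul_assoc, smul_smul, mul_assoc]
  ring_nf

lemma MinorRelations.p₁_mul_u2_pow (h : MinorRelations q u p₁ p₀ z) (b : ℕ) :
    p₁ * u 2 ^ b = q⁻¹ ^ (2 * b) • (u 3 * u 2 ^ b * u 1) - q ^ 2 • u 2 ^ (b + 2) := by
  rw [eq_sub_of_add_eq h.u3_mul_u1.symm, sub_mul, mul_assoc, mul_pow_eq_smul h.u1_mul_u2,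
    mul_smul_comm, smul_mul_assoc, ← pow_two, ← pow_add, mul_assoc, ← pow_mul, add_comm 2]

lemma MinorRelations.p₁_mul_u2_mul_pbw (h : MinorRelations q u p₁ p₀ z) (a b c d : ℕ) :
    p₁ * u 2 * pbw q u (a, b, c, d) =
      q ^ (-5 * a - 3 * b - c - 2 : ℤ) • pbw q u (a + 1, b + 1, c + 1, d)
        - q ^ (-4 * a - 3 * b - 1 : ℤ) • pbw q u (a, b + 3, c, d) := by
  have hq := h.q_ne_zero
  have straighten : p₁ * u 2 * (u 3 ^ a * u 2 ^ b * u 1 ^ c * u 0 ^ d) =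
      q⁻¹ ^ (4 * a) • (u 3 ^ a * (p₁ * u 2 ^ (b + 1)) * (u 1 ^ c * u 0 ^ d)) := by
    rw [pow_succ' (u 2), ← smul_mul_assoc, ← mul_assoc p₁, ← mul_assoc (u 3 ^ a),
      ← smul_mul_assoc, ← h.p₁_mul_u2_mul_u3_pow]
    simp only [mul_assoc]
  simp only [pbw, mul_smul_comm]
  rw [straighten, h.p₁_mul_u2_pow]
  simp only [sub_mul, mul_sub, smul_mul_assoc, mul_smul_comm, smul_sub, smul_smul, pow_succ (u 3),
    pow_succ' (u 1), mul_assoc]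
  simp only [← zpow_natCast, inv_zpow', ← zpow_add₀ hq, bexp, Nat.choose_succ_succ' _ 1,
    Nat.choose_one_right]
  congr 3 <;> push_cast <;> ring

open MulOpposite in
lemma Straightening.op_rev (h : Straightening q u) : Straightening q fun i => op (u (3 - i)) where
  q_ne_zero := h.q_ne_zero
  u0_mul_u1 := congrArg op h.u2_mul_u3
  u1_mul_u2 := congrArg op h.u1_mul_u2
  u2_mul_u3 := congrArg op h.u0_mul_u1
  u0_mul_u2 := congrArg op h.u1_mul_u3
  u1_mul_u3 := congrArg op h.u0_mul_u2
  u0_mul_u3 := congrArg op h.u0_mul_u3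

open MulOpposite in
lemma op_pbw (a b c d : ℕ) :
    op (pbw q u (a, b, c, d)) = pbw q (fun i => op (u (3 - i))) (d, c, b, a) := by
  simp only [pbw, bexp, op_smul, op_mul, op_pow, mul_assoc]
  congr 2
  ring

-- Reversing the product and the order of the `uᵢ` exchanges `p₁ u₂` and `u₁ p₀`.
open MulOpposite in
lemma MinorRelations.pbw_mul_u1_mul_p₀ (h : MinorRelations q u p₁ p₀ z) (a b c d : ℕ) :
    pbw q u (a, b, c, d) * (u 1 * p₀) =
      q ^ (-5 * d - 3 * c - b - 2 : ℤ) • pbw q u (a, b + 1, c + 1, d + 1)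
        - q ^ (-4 * d - 3 * c - 1 : ℤ) • pbw q u (a, b, c + 3, d) := by
  apply op_injective
  rw [eq_sub_of_add_eq h.u2_mul_u0.symm, ← pow_two]
  simp only [op_sub, op_smul, op_mul, op_pow, op_pbw]
  exact h.toStraightening.op_rev.minorRelations.p₁_mul_u2_mul_pbw d c b a

lemma mem_Sset_iff {a₃ a₂ a₁ a₀ b₃ b₂ b₁ b₀ : ℕ} :
    (b₃, b₂, b₁, b₀) ∈ Sset (a₃, a₂, a₁, a₀) ↔ ∃ s r : ℕ, 0 < s + r ∧
      (b₃ : ℤ) = a₃ - s ∧ (b₂ : ℤ) = a₂ + 2 * s - r ∧ (b₁ : ℤ) = a₁ - s + 2 * r ∧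
      (b₀ : ℤ) = a₀ - r := by
  simp only [Sset, tri, Set.mem_ofPred_eq, ne_eq, Prod.mk.injEq]
  constructor
  · rintro ⟨⟨s, r, h₃, h₂, h₁, h₀⟩, hne⟩
    exact ⟨s, r, by omega, h₃, h₂, h₁, h₀⟩
  · rintro ⟨s, r, hpos, h₃, h₂, h₁, h₀⟩
    exact ⟨⟨s, r, h₃, h₂, h₁, h₀⟩, by omega⟩

lemma tri_refl (a : Idx) : tri a a := ⟨0, 0, by simp⟩

/-- `x ∈ E[a] + ∑_{b ∈ S(a)} qℤ[q] E[b]`. -/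
def HasLeadingTerm (q : K) (u : Fin 4 → R) (a : Idx) (x : R) : Prop :=
  x - pbw q u a ∈ qLattice q (pbw q u) (Sset a)

lemma hasLeadingTerm_pbw (a : Idx) : HasLeadingTerm q u a (pbw q u a) := by
  rw [HasLeadingTerm, sub_self]
  exact zero_mem _

namespace HasLeadingTerm

variable {a b c d : ℕ} {x y : R}

lemma sub_mem {a : Idx} (hx : HasLeadingTerm q u a x)
    (hy : y ∈ qLattice q (pbw q u) (Sset a)) : HasLeadingTerm q u a (x - y) := by
  rw [HasLeadingTerm, sub_right_comm]
  exact _root_.sub_mem hx hy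

lemma map_mem {a : Idx} {G : AddSubgroup R} (hx : HasLeadingTerm q u a x) (f : R →ₗ[K] R)
    (hf : ∀ b, tri a b → ∀ m : ℤ, 0 ≤ m → q ^ m • f (pbw q u b) ∈ G) : f x ∈ G := by
  have leading := hf a (tri_refl a) 0 le_rfl
  have rest := map_mem_of_mem_qLattice G f (fun b hb m hm => hf b hb.1 m (by omega)) hx
  rw [zpow_zero, one_smul] at leading
  rw [← sub_add_cancel x (pbw q u a), map_add]
  exact add_mem rest leading

lemma u3_mul (hq : q ≠ 0) (hx : HasLeadingTerm q u (a, b, c, d) x) :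
    HasLeadingTerm q u (a + 1, b, c, d) (q ^ (a : ℤ) • (u 3 * x)) := by
  have key := map_mem_of_mem_qLattice (qLattice q (pbw q u) (Sset (a + 1, b, c, d)))
    (q ^ (a : ℤ) • LinearMap.mulLeft K (u 3)) ?_ hx
  · rwa [map_sub, LinearMap.smul_apply, LinearMap.smul_apply, LinearMap.mulLeft_apply,
      LinearMap.mulLeft_apply, u3_mul_pbw hq, smul_smul, ← zpow_add₀ hq, add_neg_cancel, zpow_zero,
      one_smul] at key
  rintro ⟨b₃, b₂, b₁, b₀⟩ hb m hm
  obtain ⟨s, r, hpos, h₃, h₂, h₁, h₀⟩ := mem_Sset_iff.1 hb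
  rw [LinearMap.smul_apply, LinearMap.mulLeft_apply, u3_mul_pbw hq, smul_smul, smul_smul,
    ← zpow_add₀ hq, ← zpow_add₀ hq]
  exact zpow_smul_mem_qLattice q _ (mem_Sset_iff.2 ⟨s, r, by omega⟩) (by omega)

lemma mul_u0 (hq : q ≠ 0) (hx : HasLeadingTerm q u (a, b, c, d) x) :
    HasLeadingTerm q u (a, b, c, d + 1) (q ^ (d : ℤ) • (x * u 0)) := by
  have key := map_mem_of_mem_qLattice (qLattice q (pbw q u) (Sset (a, b, c, d + 1)))
    (q ^ (d : ℤ) • LinearMap.mulRight K (u 0)) ?_ hx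
  · rwa [map_sub, LinearMap.smul_apply, LinearMap.smul_apply, LinearMap.mulRight_apply,
      LinearMap.mulRight_apply, pbw_mul_u0 hq, smul_smul, ← zpow_add₀ hq, add_neg_cancel,
      zpow_zero, one_smul] at key
  rintro ⟨b₃, b₂, b₁, b₀⟩ hb m hm
  obtain ⟨s, r, hpos, h₃, h₂, h₁, h₀⟩ := mem_Sset_iff.1 hb
  rw [LinearMap.smul_apply, LinearMap.mulRight_apply, pbw_mul_u0 hq, smul_smul, smul_smul,
    ← zpow_add₀ hq, ← zpow_add₀ hq]
  exact zpow_smul_mem_qLattice q _ (mem_Sset_iff.2 ⟨s, r, by omega⟩) (by omega)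

lemma p₁_mul_u2_mul_mem (h : MinorRelations q u p₁ p₀ z) (hx : HasLeadingTerm q u (a, b, c, d) x)
    {e : ℤ} (he : 5 * a + 3 * b + c + 3 ≤ e) :
    q ^ e • (p₁ * u 2 * x) ∈ qLattice q (pbw q u) (Sset (a + 2, b, c, d + 1)) := by
  refine hx.map_mem (q ^ e • LinearMap.mulLeft K (p₁ * u 2)) ?_
  rintro ⟨b₃, b₂, b₁, b₀⟩ ⟨s, r, h₃, h₂, h₁, h₀⟩ m hm
  simp only at h₃ h₂ h₁ h₀
  simp only [LinearMap.smul_apply, LinearMap.mulLeft_apply, h.p₁_mul_u2_mul_pbw, smul_sub,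
    smul_smul, ← zpow_add₀ h.q_ne_zero]
  exact _root_.sub_mem
    (zpow_smul_mem_qLattice q _ (mem_Sset_iff.2 ⟨s + 1, r + 1, by omega⟩) (by omega))
    (zpow_smul_mem_qLattice q _ (mem_Sset_iff.2 ⟨s + 2, r + 1, by omega⟩) (by omega))

lemma mul_u1_mul_p₀_mem (h : MinorRelations q u p₁ p₀ z) (hx : HasLeadingTerm q u (a, b, c, d) x)
    {e : ℤ} (he : 5 * d + 3 * c + b + 3 ≤ e) :
    q ^ e • (x * (u 1 * p₀)) ∈ qLattice q (pbw q u) (Sset (a + 1, b, c, d + 2)) := by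
  refine hx.map_mem (q ^ e • LinearMap.mulRight K (u 1 * p₀)) ?_
  rintro ⟨b₃, b₂, b₁, b₀⟩ ⟨s, r, h₃, h₂, h₁, h₀⟩ m hm
  simp only at h₃ h₂ h₁ h₀
  simp only [LinearMap.smul_apply, LinearMap.mulRight_apply, h.pbw_mul_u1_mul_p₀, smul_sub,
    smul_smul, ← zpow_add₀ h.q_ne_zero]
  exact _root_.sub_mem
    (zpow_smul_mem_qLattice q _ (mem_Sset_iff.2 ⟨s + 1, r + 1, by omega⟩) (by omega))
    (zpow_smul_mem_qLattice q _ (mem_Sset_iff.2 ⟨s + 1, r + 2, by omega⟩) (by omega))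

end HasLeadingTerm

/-- The multiple of `oddSeq` whose leading term is exactly `E[n+1,0,0,n]`. -/
def normOddSeq (q : K) (u : Fin 4 → R) (p₁ p₀ z : R) (n : ℕ) : R :=
  q ^ (2 * n ^ 2 - n : ℤ) • oddSeq q u p₁ p₀ z n

lemma normOddSeq_succ (hq : q ≠ 0) (n : ℕ) : normOddSeq q u p₁ p₀ z (n + 1) =
    q ^ ((n + 1 : ℕ) : ℤ) • (u 3 * normMinorSeq q p₁ p₀ z (n + 1))
      - q ^ (5 * n + 3 : ℤ) • (p₁ * u 2 * normMinorSeq q p₁ p₀ z n) := by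
  simp only [normOddSeq, normMinorSeq, oddSeq, smul_sub, mul_smul_comm, smul_smul, ← zpow_natCast,
    ← zpow_add₀ hq]
  congr 3 <;> push_cast <;> ring

lemma MinorRelations.normMinorSeq_add_two (h : MinorRelations q u p₁ p₀ z) (n : ℕ) :
    normMinorSeq q p₁ p₀ z (n + 2) =
      q ^ ((n + 1 : ℕ) : ℤ) • (normOddSeq q u p₁ p₀ z (n + 1) * u 0)
        - q ^ (5 * n + 4 : ℤ) • (normOddSeq q u p₁ p₀ z n * (u 1 * p₀)) := by
  have hq := h.q_ne_zero
  have rescale : normMinorSeq q p₁ p₀ z (n + 2) =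
      q ^ (2 * (n + 1) ^ 2 : ℤ) • q ^ (2 * (n + 1)) • minorSeq q p₁ p₀ z (n + 3) := by
    rw [normMinorSeq, smul_smul, ← zpow_natCast, ← zpow_add₀ hq]
    congr 2
    push_cast
    ring
  rw [rescale, ← h.oddSeq_mul_u0_sub]
  simp only [normOddSeq, smul_sub, smul_mul_assoc, smul_smul, ← zpow_natCast, ← zpow_add₀ hq]
  congr 3 <;> push_cast <;> ring

lemma MinorRelations.hasLeadingTerm_normMinorSeq_one (h : MinorRelations q u p₁ p₀ z) :
    HasLeadingTerm q u (1, 0, 0, 1) (normMinorSeq q p₁ p₀ z 1) := by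
  have expand : normMinorSeq q p₁ p₀ z 1 =
      pbw q u (1, 0, 0, 1) - q ^ (2 : ℤ) • pbw q u (0, 1, 1, 0) := by
    simp [normMinorSeq, pbw, bexp, minorSeq, lucasSeq_add_two, h.u3_mul_u0, zpow_ofNat]
  rw [expand]
  exact (hasLeadingTerm_pbw _).sub_mem
    (zpow_smul_mem_qLattice q _ (mem_Sset_iff.2 ⟨1, 1, by norm_num⟩) (by norm_num))

theorem MinorRelations.hasLeadingTerm_normMinorSeq (h : MinorRelations q u p₁ p₀ z) (n : ℕ) :
    HasLeadingTerm q u (n, 0, 0, n) (normMinorSeq q p₁ p₀ z n) := by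
  suffices HasLeadingTerm q u (n, 0, 0, n) (normMinorSeq q p₁ p₀ z n) ∧
      HasLeadingTerm q u (n + 1, 0, 0, n + 1) (normMinorSeq q p₁ p₀ z (n + 1)) ∧
      HasLeadingTerm q u (n + 1, 0, 0, n) (normOddSeq q u p₁ p₀ z n) from this.1
  have hq := h.q_ne_zero
  induction n with
  | zero =>
    refine ⟨?_, h.hasLeadingTerm_normMinorSeq_one, ?_⟩
    · simpa [normMinorSeq, minorSeq, pbw, bexp] using
        hasLeadingTerm_pbw (q := q) (u := u) (0, 0, 0, 0)
    · simpa [normOddSeq, oddSeq, minorSeq, pbw, bexp] using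
        hasLeadingTerm_pbw (q := q) (u := u) (1, 0, 0, 0)
  | succ n ih =>
    obtain ⟨minor, minor_succ, odd⟩ := ih
    have odd_succ :
        HasLeadingTerm q u (n + 2, 0, 0, n + 1) (normOddSeq q u p₁ p₀ z (n + 1)) := by
      rw [normOddSeq_succ hq]
      exact (minor_succ.u3_mul hq).sub_mem (minor.p₁_mul_u2_mul_mem h (by simp))
    refine ⟨minor_succ, ?_, odd_succ⟩
    rw [h.normMinorSeq_add_two]
    exact (odd_succ.mul_u0 hq).sub_mem (odd.mul_u1_mul_p₀_mem h (by simp))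

end LeadingTerm

section Uniqueness

open Polynomial Submodule

variable {K : Type*} [Field K] {bar : K →+* K} {q : K}

-- `bar` sends `q ℤ[q]` into `q⁻¹ ℤ[q⁻¹]`, which meets `q ℤ[q]` only in `0`.
lemma eq_zero_of_bar_eq (hq : Transcendental ℤ q) (hbar : bar q = q⁻¹) {f : ℤ[X]}
    (h : bar (q * eval₂ (Int.castRingHom K) q f) = q * eval₂ (Int.castRingHom K) q f) :
    f = 0 := by
  have hq0 : q ≠ 0 := fun h0 => hq (h0 ▸ isAlgebraic_zero)
  have eval_reverse : eval₂ (Int.castRingHom K) q⁻¹ f =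
      eval₂ (Int.castRingHom K) q f.reverse * q⁻¹ ^ f.natDegree := by
    let _ : Invertible q⁻¹ := invertibleOfNonzero (inv_ne_zero hq0)
    simpa only [invOf_eq_inv, inv_inv] using
      (eval₂_reverse_mul_pow (Int.castRingHom K) q⁻¹ f).symm
  rw [map_mul, hbar, hom_eval₂, hbar, RingHom.ext_int (bar.comp _) (Int.castRingHom K),
    eval_reverse, inv_pow] at h
  have reverse_eq : f.reverse = f * X ^ (f.natDegree + 2) := by
    refine sub_eq_zero.1 (transcendental_iff.1 hq _ ?_)
    rw [map_sub, map_mul, map_pow, aeval_X, sub_eq_zero]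
    change eval₂ (Int.castRingHom K) q f.reverse = eval₂ (Int.castRingHom K) q f * _
    field_simp at h
    rw [h]
    ring
  by_contra hf
  have := reverse_natDegree_le f
  rw [reverse_eq, natDegree_mul_X_pow _ hf] at this
  omega

variable {V : Type*} [AddCommGroup V] [Module K V] {ι α : Type*} [LinearOrder α]
  {E B : ι → V} {w : ι → α} {lam : ι → K} {σ : V →ₛₗ[bar] V}

lemma map_mem_span_image {T : Set ι} {c : ι} (hc : c ∈ T) (hT : ∀ d, w d < w c → d ∈ T)
    (h : σ (E c) - lam c • E c ∈ span K (E '' {d | w d < w c})) :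
    σ (E c) ∈ span K (E '' T) := by
  rw [← sub_add_cancel (σ (E c)) (lam c • E c)]
  exact add_mem (span_mono (Set.image_mono hT) h)
    (smul_mem _ _ (subset_span (Set.mem_image_of_mem E hc)))

lemma span_image_le_comap {T : Set ι} (hT : ∀ c ∈ T, ∀ d, w d < w c → d ∈ T)
    (h : ∀ c ∈ T, σ (E c) - lam c • E c ∈ span K (E '' {d | w d < w c})) :
    span K (E '' T) ≤ (span K (E '' T)).comap σ := by
  rw [span_le]
  rintro _ ⟨c, hc, rfl⟩
  exact map_mem_span_image hc (hT c hc) (h c hc)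

lemma map_sub_smul_mem_span [WellFoundedLT α]
    (hB : ∀ a, B a - E a ∈ span K (E '' {c | w c < w a})) (hσB : ∀ a, σ (B a) = lam a • B a)
    (a : ι) : σ (E a) - lam a • E a ∈ span K (E '' {c | w c < w a}) := by
  induction hwa : w a using WellFoundedLT.induction generalizing a with
  | ind x ih =>
    subst hwa
    have map_diff : σ (B a - E a) ∈ span K (E '' {c | w c < w a}) :=
      span_image_le_comap (fun c hc d hd => lt_trans hd hc) (fun c hc => ih _ hc c rfl) (hB a)
    rw [map_sub, hσB] at map_diff
    convert sub_mem (smul_mem _ (lam a) (hB a)) map_diff using 1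
    rw [smul_sub]
    abel

lemma bar_coeff_eq (hE : LinearIndependent K E) {T : Set ι} {b : ι} (hb : b ∉ T) {l c : K}
    (hl : l ≠ 0) (hσE : σ (E b) - l • E b ∈ span K (E '' T)) {y : V}
    (hy : y ∈ span K (E '' T)) (hσy : σ y ∈ span K (E '' T))
    (h : σ (c • E b + y) = l • (c • E b + y)) : bar c = c := by
  rw [map_add, map_smulₛₗ] at h
  have coeff_mem : (l * (c - bar c)) • E b ∈ span K (E '' T) := by
    convert sub_mem (add_mem (smul_mem _ (bar c) hσE) hσy) (smul_mem _ l hy) using 1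
    rw [smul_sub, sub_add_eq_add_sub, h]
    module
  have coeff_eq_zero : l * (c - bar c) = 0 := by
    by_contra h0
    exact hE.notMem_span_image hb ((smul_mem_iff _ h0).1 coeff_mem)
  exact (sub_eq_zero.1 ((mul_eq_zero.1 coeff_eq_zero).resolve_left hl)).symm

-- Compare the coefficients of an `E b` of maximal weight on both sides of `σ x = l • x`.
theorem eq_zero_of_mem_qLattice (hq : Transcendental ℤ q) (hbar : bar q = q⁻¹)
    (hE : LinearIndependent K E)
    (htri : ∀ a, σ (E a) - lam a • E a ∈ span K (E '' {c | w c < w a}))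
    {S : Set ι} {l : K} (hl : l ≠ 0) (hlam : ∀ b ∈ S, lam b = l) {x : V}
    (hx : x ∈ qLattice q E S) (hσx : σ x = l • x) : x = 0 := by
  classical
  obtain ⟨φ, hφ, rfl⟩ := mem_qLattice.1 hx
  by_contra hne
  have supp_nonempty : φ.support.Nonempty :=
    Finsupp.support_nonempty_iff.2 fun h => hne (by rw [h, map_zero])
  obtain ⟨b, hb, hmax⟩ := φ.support.exists_max_image w supp_nonempty
  set T : Set ι := {c | w c ≤ w b ∧ c ≠ b}
  set rest := ∑ d ∈ φ.support.erase b, (q * eval₂ (Int.castRingHom K) q (φ d)) • E d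
  have split : qComb q E φ = (q * eval₂ (Int.castRingHom K) q (φ b)) • E b + rest := by
    rw [qComb_apply, Finsupp.sum, ← Finset.add_sum_erase _ _ hb]
  have lower_subset {d : ι} (hd : w d ≤ w b) : {e | w e < w d} ⊆ T := fun e he =>
    ⟨(lt_of_lt_of_le he hd).le, fun h => (lt_of_lt_of_le he hd).ne (congrArg w h)⟩
  have rest_mem : rest ∈ span K (E '' T) := sum_mem fun d hd => by
    rw [Finset.mem_erase] at hd
    exact smul_mem _ _ (subset_span ⟨d, ⟨hmax d hd.2, hd.1⟩, rfl⟩)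
  have map_rest_mem : σ rest ∈ span K (E '' T) :=
    span_image_le_comap (fun d hd _ he => lower_subset hd.1 he) (fun d _ => htri d) rest_mem
  have tri_b := span_mono (Set.image_mono (lower_subset le_rfl)) (htri b)
  rw [hlam b (hφ hb)] at tri_b
  exact Finsupp.mem_support_iff.1 hb (eq_zero_of_bar_eq hq hbar
    (bar_coeff_eq hE (fun h => h.2 rfl) hl tri_b rest_mem map_rest_mem (split ▸ hσx)))

end Uniqueness

section DualCanonicalBasis

open Submodule

/-- The weight `a₃ + a₀`, which strictly decreases from `a` to every element of `S(a)`. -/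
def extremalWeight (a : Idx) : ℕ := a.1 + a.2.2.2

lemma extremalWeight_lt {a b : Idx} (h : b ∈ Sset a) : extremalWeight b < extremalWeight a := by
  obtain ⟨a₃, a₂, a₁, a₀⟩ := a
  obtain ⟨b₃, b₂, b₁, b₀⟩ := b
  obtain ⟨s, r, hpos, h₃, -, -, h₀⟩ := mem_Sset_iff.1 h
  simp only [extremalWeight]
  omega

lemma Nnum_eq_of_mem_Sset {a b : Idx} (h : b ∈ Sset a) : Nnum b = Nnum a := by
  obtain ⟨s, r, -, h₃, h₂, h₁, h₀⟩ := mem_Sset_iff.1 h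
  simp only [Nnum, h₃, h₂, h₁, h₀]
  ring

variable {K : Type*} [Field K] {R : Type*} [Ring R] [Algebra K R] {bar : K →+* K}
  {σ : R →ₛₗ[bar] R} {q : K} {u : Fin 4 → R}

lemma HasLeadingTerm.sub_pbw_mem_span {a : Idx} {x : R} (h : HasLeadingTerm q u a x) :
    x - pbw q u a ∈ span K (pbw q u '' {c | extremalWeight c < extremalWeight a}) := by
  refine map_mem_of_mem_qLattice (span K _).toAddSubgroup LinearMap.id (fun b hb m _ => ?_) h
  exact smul_mem (span K _) (q ^ m) (subset_span ⟨b, extremalWeight_lt hb, rfl⟩)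

theorem HasLeadingTerm.eq_of_map_eq (hq : Transcendental ℤ q) (hbar : bar q = q⁻¹)
    (hE : LinearIndependent K (pbw q u)) {B : Idx → R} (hB : ∀ a, HasLeadingTerm q u a (B a))
    (hσB : ∀ a, σ (B a) = q ^ (-Nnum a) • B a) {a : Idx} {x : R} (hx : HasLeadingTerm q u a x)
    (hσx : σ x = q ^ (-Nnum a) • x) : x = B a := by
  have hq0 : q ≠ 0 := fun h => hq (h ▸ isAlgebraic_zero)
  have sub_mem : x - B a ∈ qLattice q (pbw q u) (Sset a) := by
    rw [← sub_sub_sub_cancel_right x (B a) (pbw q u a)]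
    exact AddSubgroup.sub_mem _ hx (hB a)
  have sub_eq_zero' := eq_zero_of_mem_qLattice hq hbar hE
    (map_sub_smul_mem_span (fun a => (hB a).sub_pbw_mem_span) hσB) (zpow_ne_zero _ hq0)
    (fun b hb => by rw [Nnum_eq_of_mem_Sset hb]) sub_mem (by rw [map_sub, hσx, hσB, smul_sub])
  exact sub_eq_zero.1 sub_eq_zero'

end DualCanonicalBasis

section QuantumGroup

attribute [local instance] LieRing.ofAssociativeRing

lemma qq_sq_add_one_add_inv_sq_ne_zero : qq ^ 2 + 1 + qq⁻¹ ^ 2 ≠ 0 := fun h => by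
  have hq := qq_ne_zero
  field_simp at h
  exact qq_pow_ne_one (m := 6) (by norm_num) (by linear_combination (qq ^ 2 - 1) * h)

lemma qq_sq_add_inv_sq_ne_zero : qq ^ 2 + qq⁻¹ ^ 2 ≠ 0 := fun h => by
  have hq := qq_ne_zero
  field_simp at h
  exact qq_pow_ne_one (m := 8) (by norm_num) (by linear_combination (qq ^ 4 - 1) * h)

lemma qSerre_E1_E2 : QSerre qq E1 E2 := by
  simpa [E1, E2, QSerre, box3] using RingQuot.mkAlgHom_rel F SerreRel.rel1

lemma qSerre_E2_E1 : QSerre qq E2 E1 := by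
  simpa [E1, E2, QSerre, box3] using RingQuot.mkAlgHom_rel F SerreRel.rel2

lemma straightening_u : Straightening qq ![u0, u1, u2, u3] := by
  set d := (qq + qq⁻¹)⁻¹
  set a := qComm qq E2 E1 with ha
  have v1_eq : v1 = d • ⁅a, E1⁆ := smul_lie d a E1
  have v2_eq : v2 = d ^ 2 • ⁅a, ⁅a, E1⁆⁆ := by
    rw [pow_two, mul_smul, ← lie_algebra_smul, ← smul_lie, ← v1_eq]
    rfl
  have v3_eq : v3 = d ^ 3 • ⁅a, ⁅a, ⁅a, E1⁆⁆⁆ := by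
    rw [pow_succ', mul_smul, ← lie_algebra_smul, ← smul_lie, ← v2_eq]
    rfl
  convert (QSerre.straightening qq_ne_zero two_ne_zero qq_sq_add_one_add_inv_sq_ne_zero
    qq_sq_add_inv_sq_ne_zero qSerre_E1_E2 qSerre_E2_E1 ha).pow_smul ((1 - qq⁻¹ ^ 2)⁻¹ ^ 2 * d)
    using 1
  funext i
  fin_cases i
  · exact (one_smul F E1).symm
  · change u1 = _ ^ 1 • ⁅a, E1⁆
    rw [u1, v1_eq, smul_smul, pow_one]
  · change u2 = _ ^ 2 • ⁅a, ⁅a, E1⁆⁆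
    rw [u2, v2_eq, smul_smul, mul_pow, ← pow_mul]
  · change u3 = _ ^ 3 • ⁅a, ⁅a, ⁅a, E1⁆⁆⁆
    rw [u3, v3_eq, smul_smul, mul_pow, ← pow_mul]

/-- The generators `u₀, …, u₃` of `S` as one family. -/
def us : Fin 4 → Sgen := ![us0, us1, us2, us3]

/-- The quantum minor `z = u₃u₀ - q²u₂u₁` of `S`. -/
def zs : Sgen := us3 * us0 - qq ^ 2 • (us2 * us1)

lemma minorRelations_us : MinorRelations qq us ps1 ps0 zs := by
  have straightening_us : Straightening qq us :=
    Straightening.of_map (φ := Sgen.val) Subtype.val_injective (by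
      convert straightening_u using 1
      funext i
      fin_cases i <;> rfl)
  exact straightening_us.minorRelations

lemma linearIndependent_pbw (hPBW : LinearIndependent F mon) :
    LinearIndependent F (pbw qq us) :=
  hPBW.units_smul fun a => Units.mk0 (qq ^ bexp a) (pow_ne_zero _ qq_ne_zero)

variable {bar : F →+* F} {σ : Sgen → Sgen} {B : Idx → Sgen}

lemma SigmaHyp.exists_isBarAntiautomorphism (hσ : SigmaHyp bar σ) :
    ∃ σ' : Sgen →ₛₗ[bar] Sgen, ⇑σ' = σ ∧ IsBarAntiautomorphism σ' qq us := by
  obtain ⟨bar_q, bij, map_add, map_mul, map_smul, map_u0, map_u1, map_u2, map_u3⟩ := hσ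
  refine ⟨{ toFun := σ, map_add' := map_add, map_smul' := map_smul }, rfl, ?_⟩
  have map_one : σ 1 = 1 := by
    obtain ⟨x, hx⟩ := bij.2 1
    have := map_mul x 1
    rwa [mul_one, hx, mul_one, eq_comm] at this
  refine ⟨bar_q, map_one, map_mul, fun i => ?_⟩
  fin_cases i
  · exact map_u0.trans (one_smul F us0).symm
  exacts [map_u1, map_u2, map_u3]

lemma DCB.hasLeadingTerm (hB : DCB bar σ B) (a : Idx) : HasLeadingTerm qq us a (B a) := by
  obtain ⟨φ, hφ, sub_eq⟩ := (hB a).1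
  exact mem_qLattice.2 ⟨φ, hφ, sub_eq.symm⟩

lemma DCB.eq_normMinorSeq (hB : DCB bar σ B) (hPBW : LinearIndependent F mon)
    (hσ : SigmaHyp bar σ) (n : ℕ) : B (n, 0, 0, n) = normMinorSeq qq ps1 ps0 zs n := by
  obtain ⟨σ', rfl, hσ'⟩ := hσ.exists_isBarAntiautomorphism
  -- Mathlib's `ℤ`-algebra structure on `RatFunc ℚ` is not defeq to that of a general ring.
  have hq := Subsingleton.elim (RatFunc.instAlgebraOfPolynomial ℚ ℤ) (Ring.toIntAlgebra F) ▸
    transcendental_qq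
  exact (HasLeadingTerm.eq_of_map_eq hq hσ'.bar_q (linearIndependent_pbw hPBW)
    hB.hasLeadingTerm (fun a => (hB a).2) (minorRelations_us.hasLeadingTerm_normMinorSeq n)
    (hσ'.map_normMinorSeq minorRelations_us n)).symm

lemma qq_zpow_smul_boxSum_minorCoeff {M : Type*} [AddCommGroup M] [Module F M] (n : ℕ)
    (g : ℕ → ℕ → M) : qq ^ (2 * n * (n - 1) : ℤ) • boxSum n (minorCoeff n) g =
      ∑ kl ∈ (Finset.range (n + 1) ×ˢ Finset.range (n + 1)).filter fun kl => kl.1 + kl.2 ≤ n,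
        (qq ^ gexp n kl.1 kl.2 * qbinom (n - kl.1) kl.2 * qbinom (n - kl.2) kl.1) •
          g kl.1 kl.2 := by
  rw [boxSum, ← Finset.sum_product', Finset.sum_filter, Finset.smul_sum]
  refine Finset.sum_congr rfl fun kl _ => ?_
  rw [smul_smul, minorCoeff, mul_ite, mul_zero, ite_smul, zero_smul, ← mul_assoc, ← mul_assoc,
    ← zpow_add₀ qq_ne_zero, add_sub_cancel]

end QuantumGroup

/-- For every natural number `n ≥ 0`,
`u₂ⁿ · B[n,0,0,n] · u₁ⁿ = Σ_{(k,l)} q^{g(n,k,l)} [n−k; l][n−l; k]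
p₁^{n−k} u₂^{2k} u₁^{2l} p₀^{n−l}`, where the sum runs over all pairs
`(k,l) ∈ ℕ²` with `k + l ≤ n`. -/
theorem stmt18 (bar : F →+* F) (σ : Sgen → Sgen) (B : Idx → Sgen)
    (hPBW : LinearIndependent F mon) (hσ : SigmaHyp bar σ) (hB : DCB bar σ B) (n : ℕ) :
    us2 ^ n * B (n, 0, 0, n) * us1 ^ n =
      ∑ kl ∈ (Finset.range (n + 1) ×ˢ Finset.range (n + 1)).filter
          (fun kl => kl.1 + kl.2 ≤ n),
        (qq ^ gexp n kl.1 kl.2 * qbinom ((n : ℤ) - kl.1) kl.2 *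
            qbinom ((n : ℤ) - kl.2) kl.1) •
          (ps1 ^ (n - kl.1) * us2 ^ (2 * kl.1) * us1 ^ (2 * kl.2) * ps0 ^ (n - kl.2)) := by
  rw [hB.eq_normMinorSeq hPBW hσ, normMinorSeq, mul_smul_comm, smul_mul_assoc]
  have expansion :=
    minorRelations_us.u2_pow_mul_minorSeq_mul_u1_pow isExpansionCoeff_minorCoeff n
  exact (congrArg (_ • ·) expansion).trans (qq_zpow_smul_boxSum_minorCoeff n _)
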